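/- arXiv:1909.03407 — 2 statements merged into one kernel-verified Lean document; each statement's English description precedes it below -/
import Mathlib

section
/- Let α, β ≥ 2 be integers satisfying α² − 125β² = 4 and α + β ≡ 0 (mod 25), and set d = (α+β)² − 4. Let ζ₅ = exp(2πi/5) ∈ ℂ and let M = ℚ((ζ₅ − ζ₅⁻¹)·√d) be the subfield of ℂ generated over ℚ by (ζ₅ − ζ₅⁻¹)·√d. Then the 5-rank of the ideal class group of M is at least 2; equivalently, there exists an injective group homomorphism from (ℤ/5ℤ) × (ℤ/5ℤ) into the ideal class group Cl(𝓞_M) of the ring of integers of M. -/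
open NumberField

section ClassGroupRank

open Pointwise
open scoped nonZeroDivisors

set_option linter.unusedSectionVars false

theorem Module.finite_of_fg_of_nsmul_eq_zero (A : Type*) [AddCommGroup A] [Module.Finite ℤ A]
    (n : ℕ) (hn : n ≠ 0) (h : ∀ x : A, n • x = 0) : Finite A := by
  refine Module.finite_of_fg_torsion A fun x => ?_
  refine ⟨⟨(n : ℤ), by simpa using hn⟩, ?_⟩
  simpa using h x

theorem AddSubgroup.index_range_nsmul_ne_zero (A : Type*) [AddCommGroup A] [Module.Finite ℤ A]
    (n : ℕ) (hn : n ≠ 0) : (nsmulAddMonoidHom (α := A) n).range.index ≠ 0 := by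
  have : Module.Finite ℤ (A ⧸ (nsmulAddMonoidHom (α := A) n).range) :=
    Module.Finite.of_surjective
      (QuotientAddGroup.mk' (nsmulAddMonoidHom (α := A) n).range).toIntLinearMap
      (QuotientAddGroup.mk'_surjective _)
  have : Finite (A ⧸ (nsmulAddMonoidHom (α := A) n).range) := by
    refine Module.finite_of_fg_of_nsmul_eq_zero _ n hn fun x => ?_
    obtain ⟨y, rfl⟩ := QuotientAddGroup.mk'_surjective _ x
    rw [← map_nsmul]
    exact (QuotientAddGroup.eq_zero_iff _).2 ⟨y, rfl⟩
  exact AddSubgroup.index_ne_zero_of_finite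

theorem AddSubgroup.pow_finrank_le_index_range_nsmul (A : Type*) [AddCommGroup A]
    [Module.Finite ℤ A] (n : ℕ) (hn : n ≠ 0) :
    n ^ Module.finrank ℤ A ≤ (nsmulAddMonoidHom (α := A) n).range.index := by
  have : NeZero n := ⟨hn⟩
  let T := A ⧸ Submodule.torsion ℤ A
  let b := Module.finBasis ℤ T
  have hr : Module.finrank ℤ T = Module.finrank ℤ A := by
    have : Module.finrank ℤ T + _ = _ :=
      Submodule.finrank_quotient_add_finrank (Submodule.torsion ℤ A)
    have h0 : Module.finrank ℤ (Submodule.torsion ℤ A) = 0 :=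
      Module.finrank_eq_zero_iff_isTorsion.2 (Submodule.torsion_isTorsion)
    omega
  let f : A →+ (Fin (Module.finrank ℤ T) → ZMod n) :=
    ((Int.castAddHom (ZMod n)).compLeft _).comp
      (b.equivFun.toLinearMap.comp (Submodule.mkQ _)).toAddMonoidHom
  have hf : Function.Surjective f := by
    refine Function.Surjective.comp (g := (Int.castAddHom (ZMod n)).compLeft _) ?_ ?_
    · intro v
      choose w hw using fun j => ZMod.intCast_surjective (v j)
      exact ⟨w, funext hw⟩
    · exact b.equivFun.surjective.comp (Submodule.mkQ_surjective _)
  have hle : (nsmulAddMonoidHom (α := A) n).range ≤ f.ker := by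
    rintro _ ⟨y, rfl⟩
    rw [AddMonoidHom.mem_ker, nsmulAddMonoidHom_apply, map_nsmul]
    ext j
    simp
  have hk : f.ker.index = n ^ Module.finrank ℤ A := by
    rw [AddSubgroup.index_ker, AddMonoidHom.range_eq_top.2 hf, ← hr]
    simp
  rw [← hk]
  exact Nat.le_of_dvd (Nat.pos_of_ne_zero (AddSubgroup.index_range_nsmul_ne_zero A n hn))
    (AddSubgroup.index_dvd_of_le hle)


theorem AddSubgroup.relIndex_map_map_dvd {A : Type*} [AddCommGroup A] (f : A →+ A)
    {H K : AddSubgroup A} (h : H ≤ K) :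
    (H.map f).relIndex (K.map f) ∣ H.relIndex K := by
  have hs : K ⊔ f.ker = K ⊔ (H ⊔ f.ker) := by
    rw [← sup_assoc, sup_eq_left.2 h]
  rw [AddSubgroup.relIndex_map_map, hs, AddSubgroup.relIndex_sup_right]
  exact AddSubgroup.relIndex_dvd_of_le_left K le_sup_left

theorem AddSubgroup.relIndex_map_map_dvd_mul {A : Type*} [AddCommGroup A] (f : A →+ A)
    {H K : AddSubgroup A} (h : H ≤ K) (hK : K.map f ≤ K) :
    (H.map f).relIndex K ∣ H.relIndex K * (K.map f).relIndex K := by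
  rw [← AddSubgroup.relIndex_mul_relIndex _ _ _ (AddSubgroup.map_mono h) hK]
  exact mul_dvd_mul_right (AddSubgroup.relIndex_map_map_dvd f h) _

theorem AddSubgroup.relIndex_map_nsmul_self {A : Type*} [AddCommGroup A] (D : AddSubgroup A)
    (n : ℕ) :
    (D.map (nsmulAddMonoidHom (α := A) n)).relIndex D =
      (nsmulAddMonoidHom (α := D) n).range.index := by
  rw [AddSubgroup.relIndex]
  congr 1
  ext x
  simp only [AddSubgroup.mem_addSubgroupOf, AddSubgroup.mem_map, AddMonoidHom.mem_range]
  constructor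
  · rintro ⟨y, hy, h⟩
    exact ⟨⟨y, hy⟩, Subtype.ext h⟩
  · rintro ⟨y, h⟩
    exact ⟨y, y.2, congrArg Subtype.val h⟩

/-- An inequality for the Herbrand quotient of a finitely generated module `E` over a cyclic group
of order `5`, where `N` and `i` play the roles of the norm to and the inclusion of the
invariants. -/
theorem five_mul_index_range_le_relIndex {E F : Type*} [AddCommGroup E] [AddCommGroup F]
    [Module.Finite ℤ E] [Module.Finite ℤ F] (N : E →+ F) (i : F →+ E) (g : E →+ E)
    (hNi : ∀ y, N (i y) = 5 • y)
    (hiN : ∀ x, i (N x) = x + g x + g (g x) + g (g (g x)) + g (g (g (g x))))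
    (hNg : ∀ x, N (g x) = N x) (hgi : ∀ y, g (i y) = i y) (r : ℕ)
    (hF : (nsmulAddMonoidHom (α := F) 5).range.index ≤ 5 ^ r)
    (hFr : Module.finrank ℤ F ≤ r) (hE : 5 * r + 4 ≤ Module.finrank ℤ E) :
    N.range.index ≠ 0 ∧ (g - AddMonoidHom.id E).range.relIndex N.ker ≠ 0 ∧
      5 * N.range.index ≤ (g - AddMonoidHom.id E).range.relIndex N.ker := by
  set l : E →+ E := g - AddMonoidHom.id E with hl
  have hlx : ∀ x, l x = g x - x := fun x => rfl
  set D := N.ker with hD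
  have hlD : l.range ≤ D := by
    rintro _ ⟨x, rfl⟩
    simp [hD, AddMonoidHom.mem_ker, hlx, hNg]
  have hgD : ∀ x ∈ D, g x ∈ D := fun x hx => by
    rw [hD, AddMonoidHom.mem_ker] at *
    rw [hNg, hx]
  have hmap : D.map l ≤ l.range := by
    rintro _ ⟨x, -, rfl⟩
    exact ⟨x, rfl⟩
  have hsum : ∀ x ∈ D, x + g x + g (g x) + g (g (g x)) + g (g (g (g x))) = 0 := fun x hx => by
    rw [← hiN, (AddMonoidHom.mem_ker).1 hx, map_zero]
  set m := nsmulAddMonoidHom (α := E) 5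
  have h5l : D.map m ≤ D.map l := by
    rintro _ ⟨x, hx, rfl⟩
    refine ⟨-(4 • x + 3 • g x + 2 • g (g x) + g (g (g x))), ?_, ?_⟩
    · refine neg_mem (add_mem (add_mem (add_mem (nsmul_mem hx _) (nsmul_mem (hgD _ hx) _))
        (nsmul_mem (hgD _ (hgD _ hx)) _)) (hgD _ (hgD _ (hgD _ hx))))
    · have := hsum x hx
      have h4 : g (g (g (g x))) = -(x + g x + g (g x) + g (g (g x))) :=
        eq_neg_of_add_eq_zero_right this
      simp only [hlx, map_neg, map_add, map_nsmul, h4, m, nsmulAddMonoidHom_apply]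
      abel
  have hl4 : (((D.map l).map l).map l).map l ≤ D.map m := by
    rintro _ ⟨_, ⟨_, ⟨_, ⟨x, hx, rfl⟩, rfl⟩, rfl⟩, rfl⟩
    refine ⟨-(g (g (g x))) + g (g x) - g x, ?_, ?_⟩
    · exact sub_mem (add_mem (neg_mem (hgD _ (hgD _ (hgD _ hx)))) (hgD _ (hgD _ hx))) (hgD _ hx)
    · have := hsum x hx
      have h4 : g (g (g (g x))) = -(x + g x + g (g x) + g (g (g x))) :=
        eq_neg_of_add_eq_zero_right this
      simp only [hlx, map_sub, h4, m, nsmulAddMonoidHom_apply]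
      abel
  have : Module.Finite ℤ D := Module.Finite.iff_fg.2
    (IsNoetherian.noetherian (AddSubgroup.toIntSubmodule D))
  have hm0 : (D.map m).relIndex D ≠ 0 := by
    rw [AddSubgroup.relIndex_map_nsmul_self]
    exact AddSubgroup.index_range_nsmul_ne_zero D 5 (by norm_num)
  have hm : 5 ^ Module.finrank ℤ D ≤ (D.map m).relIndex D := by
    rw [AddSubgroup.relIndex_map_nsmul_self]
    exact AddSubgroup.pow_finrank_le_index_range_nsmul D 5 (by norm_num)
  have hrank : 4 * r + 4 ≤ Module.finrank ℤ D := by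
    have h1 := Submodule.finrank_quotient_add_finrank (LinearMap.ker N.toIntLinearMap)
    have h2 := N.toIntLinearMap.quotKerEquivRange.finrank_eq
    have h3 := Submodule.finrank_le (LinearMap.range N.toIntLinearMap)
    have h4 : Module.finrank ℤ (LinearMap.ker N.toIntLinearMap) = Module.finrank ℤ D := rfl
    omega
  set a := (D.map l).relIndex D with ha
  have ha0 : a ≠ 0 := fun h => hm0 (AddSubgroup.relIndex_eq_zero_of_le_left h5l h)
  have hD1 : D.map l ≤ D := hmap.trans hlD
  have hD2 := (AddSubgroup.map_mono (f := l) hD1).trans hD1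
  have hD3 := (AddSubgroup.map_mono (f := l) hD2).trans hD1
  have ha4 : (D.map m).relIndex D ≤ a ^ 4 := by
    have d1 := AddSubgroup.relIndex_map_map_dvd_mul l hD1 hD1
    have d2 := AddSubgroup.relIndex_map_map_dvd_mul l hD2 hD1
    have d3 := AddSubgroup.relIndex_map_map_dvd_mul l hD3 hD1
    refine Nat.le_of_dvd (by positivity) ((AddSubgroup.relIndex_dvd_of_le_left D hl4).trans ?_)
    calc _ ∣ _ := d3
      _ ∣ _ := mul_dvd_mul_right (d2.trans (mul_dvd_mul_right d1 _)) _
      _ = a ^ 4 := by rw [← ha]; ring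
  have ha5 : 5 ^ (r + 1) ≤ a := by
    refine (Nat.pow_le_pow_iff_left (n := 4) (by norm_num)).1 ?_
    calc (5 ^ (r + 1)) ^ 4 = 5 ^ (4 * r + 4) := by ring
      _ ≤ 5 ^ Module.finrank ℤ D := Nat.pow_le_pow_right (by norm_num) hrank
      _ ≤ a ^ 4 := hm.trans ha4
  have hmul : (D ⊔ l.ker).index * l.range.relIndex D = a := by
    rw [ha, ← AddSubgroup.relIndex_mul_relIndex _ _ _ hmap hlD]
    congr 1
    have := AddSubgroup.relIndex_map_map l D ⊤
    rw [← AddMonoidHom.range_eq_map, top_sup_eq, AddSubgroup.relIndex_top_right] at this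
    exact this.symm
  have hi : i.range ≤ l.ker := by
    rintro _ ⟨y, rfl⟩
    simp [AddMonoidHom.mem_ker, hlx, hgi]
  have hFmul : (i.range ⊔ D).index * N.range.index = (nsmulAddMonoidHom (α := F) 5).range.index := by
    rw [← AddSubgroup.index_map]
    congr 1
    ext z
    simp [hNi]
  have hF0 := AddSubgroup.index_range_nsmul_ne_zero F 5 (by norm_num)
  rw [← hFmul] at hF0
  have hle : (D ⊔ l.ker).index ≤ (i.range ⊔ D).index :=
    Nat.le_of_dvd (Nat.pos_of_ne_zero (left_ne_zero_of_mul hF0))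
      (AddSubgroup.index_dvd_of_le (sup_le (hi.trans le_sup_right) le_sup_left))
  have hn0 := right_ne_zero_of_mul hF0
  have hr0 : l.range.relIndex D ≠ 0 := right_ne_zero_of_mul (hmul.trans_ne ha0)
  refine ⟨hn0, hr0, ?_⟩
  have hq : 0 < (D ⊔ l.ker).index :=
    Nat.pos_of_ne_zero (left_ne_zero_of_mul (hmul.trans_ne ha0))
  refine Nat.le_of_mul_le_mul_left ?_ hq
  calc (D ⊔ l.ker).index * (5 * N.range.index)
      ≤ (i.range ⊔ D).index * (5 * N.range.index) := Nat.mul_le_mul_right _ hle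
    _ = 5 * ((i.range ⊔ D).index * N.range.index) := by ring
    _ ≤ 5 * 5 ^ r := by rw [hFmul]; exact Nat.mul_le_mul_left _ hF
    _ = 5 ^ (r + 1) := by ring
    _ ≤ _ := ha5.trans hmul.ge

theorem Ideal.map_under_dvd_of_forall_smul_eq {A B G : Type*} [CommRing A]
    [CommRing B] [IsDedekindDomain A] [IsDedekindDomain B] [Algebra A B] [Group G] [Finite G]
    [MulSemiringAction G B] [IsGaloisGroup G A B] [Module.Finite A B] [Module.IsTorsionFree A B]
    (J P : Ideal B) (hJ : ∀ σ : G, σ • J = J) [P.IsPrime] (hJP : J ≤ P)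
    (hP : P.under A ≠ ⊥)
    (hram : ∀ P : Ideal B, P.IsPrime → P ≠ ⊥ → P.ramificationIdx A = 1) :
    (P.under A).map (algebraMap A B) ∣ J := by
  set p := P.under A with hp
  have hpp : p.IsPrime := inferInstance
  have : p.IsMaximal := hpp.isMaximal hP
  have hbot : ∀ Q : Ideal B, Q.LiesOver p → Q ≠ ⊥ := fun Q hQ h => by
    rw [hQ.over, h, Ideal.under_bot] at hP
    exact hP rfl
  rw [Ideal.map_algebraMap_eq_finsetProd_pow (R := B) hP]
  refine Finset.prod_dvd_of_coprime ?_ ?_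
  · intro Q hQ Q' hQ' hne
    simp only [Set.coe_toFinset] at hQ hQ'
    obtain ⟨hQ1, hQ2⟩ := hQ
    obtain ⟨hQ1', hQ2'⟩ := hQ'
    have := hQ1.isMaximal (hbot Q hQ2)
    have := hQ1'.isMaximal (hbot Q' hQ2')
    exact (Ideal.isCoprime_of_isMaximal hne).pow
  · intro Q hQ
    rw [Set.mem_toFinset] at hQ
    obtain ⟨hQ1, hQ2⟩ := hQ
    rw [hram Q hQ1 (hbot Q hQ2), pow_one, Ideal.dvd_iff_le]
    have : P.LiesOver p := ⟨hp⟩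
    obtain ⟨σ, rfl⟩ := Ideal.exists_smul_eq_of_isGaloisGroup p P Q G
    rw [← hJ σ]
    exact Ideal.pointwise_smul_le_pointwise_smul_iff.2 hJP

/-- In an unramified Galois extension, the ideals invariant under the Galois group are extended
from the base. -/
theorem Ideal.exists_map_eq_of_forall_smul_eq {A B G : Type*} [CommRing A]
    [CommRing B] [IsDedekindDomain A] [IsDedekindDomain B] [Algebra A B] [Group G] [Finite G]
    [MulSemiringAction G B] [IsGaloisGroup G A B] [Module.Finite A B] [Module.IsTorsionFree A B]
    (hram : ∀ P : Ideal B, P.IsPrime → P ≠ ⊥ → P.ramificationIdx A = 1)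
    (J : Ideal B) (hJ0 : J ≠ ⊥) (hJ : ∀ σ : G, σ • J = J) :
    ∃ I : Ideal A, I.map (algebraMap A B) = J := by
  induction J using WellFoundedGT.induction with
  | ind J ih =>
  by_cases htop : J = ⊤
  · exact ⟨⊤, by rw [htop, Ideal.map_top]⟩
  obtain ⟨P, hPm, hJP⟩ := Ideal.exists_le_maximal J htop
  have hP0 : P ≠ ⊥ := fun h => hJ0 (le_bot_iff.1 (h ▸ hJP))
  have hp : P.under A ≠ ⊥ := mt Ideal.eq_bot_of_comap_eq_bot hP0
  have hdvd := Ideal.map_under_dvd_of_forall_smul_eq (A := A) J P hJ hJP hp hram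
  set q := (P.under A).map (algebraMap A B) with hq
  obtain ⟨J', hJ'⟩ := hdvd
  have hq0 : q ≠ 0 := fun h => hJ0 (by rw [hJ', h, zero_mul]; rfl)
  have hJ'0 : J' ≠ ⊥ := fun h => hJ0 (by rw [hJ', h]; exact mul_zero _)
  have hqP : q ≤ P := Ideal.map_le_iff_le_comap.2 le_rfl
  have hlt : J < J' := by
    refine lt_of_le_of_ne (hJ' ▸ Ideal.mul_le_right) fun h => ?_
    have h1 : q * J' = 1 * J' := by rw [one_mul, ← hJ', h]
    have : q = 1 := mul_right_cancel₀ hJ'0 h1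
    exact hPm.ne_top (top_le_iff.1 (by rwa [this, Ideal.one_eq_top] at hqP))
  have hqs : ∀ σ : G, σ • q = q := fun σ => by
    rw [Ideal.pointwise_smul_def, hq, Ideal.map_map]
    congr 1
    ext a
    exact smul_algebraMap σ a
  obtain ⟨I, hI⟩ := ih J' hlt hJ'0 fun σ => by
    have h := hJ σ
    rw [hJ', smul_mul', hqs] at h
    exact mul_left_cancel₀ hq0 h
  exact ⟨P.under A * I, by rw [Ideal.map_mul, hI, hJ']⟩

theorem ClassGroup.ker_mk0_le_ker {R H : Type*} [CommRing R] [IsDedekindDomain R] [CommGroup H]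
    (φ : (Ideal R)⁰ →* H)
    (hφ : ∀ (x : R) (hx : Ideal.span {x} ∈ (Ideal R)⁰), φ ⟨Ideal.span {x}, hx⟩ = 1) :
    Con.ker (ClassGroup.mk0 (R := R)) ≤ Con.ker φ := by
  intro I J h
  obtain ⟨x, y, hx, hy, hxy⟩ := (ClassGroup.mk0_eq_mk0_iff).1 h
  have hx' : Ideal.span {x} ∈ (Ideal R)⁰ := mem_nonZeroDivisors_iff_ne_zero.2 (by simpa using hx)
  have hy' : Ideal.span {y} ∈ (Ideal R)⁰ := mem_nonZeroDivisors_iff_ne_zero.2 (by simpa using hy)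
  have h2 : (⟨_, hx'⟩ : (Ideal R)⁰) * I = ⟨_, hy'⟩ * J := Subtype.ext hxy
  have := congrArg φ h2
  simpa [hφ] using this

/-- A homomorphism from nonzero ideals that kills principal ideals factors through the class
group. -/
noncomputable def ClassGroup.lift {R H : Type*} [CommRing R] [IsDedekindDomain R] [CommGroup H]
    (φ : (Ideal R)⁰ →* H)
    (hφ : ∀ (x : R) (hx : Ideal.span {x} ∈ (Ideal R)⁰), φ ⟨Ideal.span {x}, hx⟩ = 1) :
    ClassGroup R →* H :=
  ((Con.ker (ClassGroup.mk0 (R := R))).lift φ (ClassGroup.ker_mk0_le_ker φ hφ)).comp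
    (Con.quotientKerEquivOfSurjective _ ClassGroup.mk0_surjective).symm.toMonoidHom

theorem ClassGroup.lift_mk0 {R H : Type*} [CommRing R] [IsDedekindDomain R] [CommGroup H]
    (φ : (Ideal R)⁰ →* H)
    (hφ : ∀ (x : R) (hx : Ideal.span {x} ∈ (Ideal R)⁰), φ ⟨Ideal.span {x}, hx⟩ = 1)
    (I : (Ideal R)⁰) : ClassGroup.lift φ hφ (ClassGroup.mk0 I) = φ I := by
  have : (Con.quotientKerEquivOfSurjective _ ClassGroup.mk0_surjective).symm (ClassGroup.mk0 I) =
      (I : (Con.ker (ClassGroup.mk0 (R := R))).Quotient) := by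
    rw [MulEquiv.symm_apply_eq]
    rfl
  simp only [ClassGroup.lift, MonoidHom.comp_apply, MulEquiv.toMonoidHom_eq_coe,
    MonoidHom.coe_coe, this]
  rfl

@[to_additive]
theorem Subgroup.relIndex_le_card_of_forall {A T : Type*} [CommGroup A] [Finite T]
    (H K : Subgroup A) (f : K → T) (hf : ∀ x y : K, f x = f y → (x : A) / y ∈ H) :
    H.relIndex K ≤ Nat.card T := by
  refine Nat.card_le_card_of_injective (fun q : K ⧸ H.subgroupOf K => f q.out) fun p q h => ?_
  rw [← QuotientGroup.out_eq' p, ← QuotientGroup.out_eq' q, QuotientGroup.eq_iff_div_mem]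
  exact hf _ _ h

namespace NumberField

variable {M L : Type} [Field M] [NumberField M] [Field L] [NumberField L] [Algebra M L]
  [IsGalois M L]

/-- Hilbert 90 for pairs of integers with the same relative norm. -/
theorem exists_mul_eq_mul_smul_of_intNorm_eq (g : Gal(L/M))
    (hg : ∀ σ, σ ∈ Subgroup.zpowers g) {a b : 𝓞 L} (ha : a ≠ 0) (hb : b ≠ 0)
    (h : Algebra.intNorm (𝓞 M) (𝓞 L) a = Algebra.intNorm (𝓞 M) (𝓞 L) b) :
    ∃ z : 𝓞 L, z ≠ 0 ∧ a * z = b * g • z := by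
  have ha' : (a : L) ≠ 0 := by simpa using ha
  have hb' : (b : L) ≠ 0 := by simpa using hb
  have : IsCyclic Gal(L/M) := ⟨g, hg⟩
  have hnorm : Algebra.norm M ((b : L) / a) = 1 := by
    have h' := congrArg (algebraMap (𝓞 M) M) h
    rw [Algebra.algebraMap_intNorm (L := L), Algebra.algebraMap_intNorm (L := L)] at h'
    have hmul : Algebra.norm M ((b : L) / a) * Algebra.norm M (a : L) = Algebra.norm M (a : L) := by
      rw [← map_mul, div_mul_cancel₀ _ ha', h']
    exact mul_right_cancel₀ (Algebra.norm_ne_zero_iff.2 ha') (hmul.trans (one_mul _).symm)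
  obtain ⟨y, hy⟩ := groupCohomology.exists_div_of_norm_eq_one hg hnorm
  have hya : IsAlgebraic ℤ (y : L) :=
    (IsFractionRing.isAlgebraic_iff ℤ ℚ L).2 (Algebra.IsAlgebraic.isAlgebraic _)
  obtain ⟨m, hm0, hm⟩ := hya.exists_integral_multiple
  refine ⟨⟨m • (y : L), hm⟩, ?_, ?_⟩
  · intro h0
    have h1 : m • (y : L) = 0 := congrArg Subtype.val h0
    simp [hm0] at h1
  · apply RingOfIntegers.ext
    change (a : L) * (m • (y : L)) = b * g (m • (y : L))
    have hgy : g (y : L) ≠ 0 := by simp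
    rw [div_eq_div_iff hgy ha'] at hy
    rw [map_zsmul, mul_smul_comm, mul_smul_comm, mul_comm, hy]

variable (M L) in
/-- The relative norm on nonzero ideals. -/
noncomputable def relNormNonZero : (Ideal (𝓞 L))⁰ →* (Ideal (𝓞 M))⁰ :=
  ((Ideal.relNorm (𝓞 M) : Ideal (𝓞 L) →*₀ Ideal (𝓞 M)).toMonoidHom.comp
    (Ideal (𝓞 L))⁰.subtype).codRestrict _ fun I =>
      mem_nonZeroDivisors_iff_ne_zero.2 fun h =>
        nonZeroDivisors.coe_ne_zero I (Ideal.relNorm_eq_bot_iff.1 h)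

variable (M L) in
/-- The norm homomorphism between class groups. -/
noncomputable def classNorm : ClassGroup (𝓞 L) →* ClassGroup (𝓞 M) :=
  ClassGroup.lift (ClassGroup.mk0.comp (relNormNonZero M L)) fun x hx => by
    rw [MonoidHom.comp_apply, ClassGroup.mk0_eq_one_iff]
    change (Ideal.relNorm (𝓞 M) (Ideal.span {x})).IsPrincipal
    rw [Ideal.relNorm_singleton]
    exact ⟨_, rfl⟩

theorem classNorm_mk0 (I : (Ideal (𝓞 L))⁰) :
    classNorm M L (ClassGroup.mk0 I) = ClassGroup.mk0 (relNormNonZero M L I) :=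
  ClassGroup.lift_mk0 _ _ I

/-- The action of a Galois automorphism on nonzero ideals. -/
noncomputable def galoisIdeal (g : Gal(L/M)) : (Ideal (𝓞 L))⁰ →* (Ideal (𝓞 L))⁰ :=
  ((MulDistribMulAction.toMonoidHom (Ideal (𝓞 L)) g).comp
    (Ideal (𝓞 L))⁰.subtype).codRestrict _ fun I =>
      mem_nonZeroDivisors_iff_ne_zero.2 fun h =>
        nonZeroDivisors.coe_ne_zero I ((smul_eq_zero_iff_eq g).1 h)

theorem coe_galoisIdeal (g : Gal(L/M)) (I : (Ideal (𝓞 L))⁰) :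
    (galoisIdeal g I : Ideal (𝓞 L)) = g • (I : Ideal (𝓞 L)) := rfl

theorem smul_span_singleton (g : Gal(L/M)) (x : 𝓞 L) :
    g • (Ideal.span {x} : Ideal (𝓞 L)) = Ideal.span {g • x} := by
  rw [Ideal.smul_closure, Set.smul_set_singleton]

/-- The action of a Galois automorphism on the class group. -/
noncomputable def galoisClass (g : Gal(L/M)) : ClassGroup (𝓞 L) →* ClassGroup (𝓞 L) :=
  ClassGroup.lift (ClassGroup.mk0.comp (galoisIdeal g)) fun x hx => by
    rw [MonoidHom.comp_apply, ClassGroup.mk0_eq_one_iff]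
    change (g • Ideal.span {x}).IsPrincipal
    rw [smul_span_singleton]
    exact ⟨_, rfl⟩

theorem galoisClass_mk0 (g : Gal(L/M)) (I : (Ideal (𝓞 L))⁰) :
    galoisClass g (ClassGroup.mk0 I) = ClassGroup.mk0 (galoisIdeal g I) :=
  ClassGroup.lift_mk0 _ _ I

theorem classNorm_galoisClass (g : Gal(L/M)) (c : ClassGroup (𝓞 L)) :
    classNorm M L (galoisClass g c) = classNorm M L c := by
  obtain ⟨I, rfl⟩ := ClassGroup.mk0_surjective c
  rw [galoisClass_mk0, classNorm_mk0, classNorm_mk0]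
  congr 1
  exact Subtype.ext (Ideal.relNorm_smul (𝓞 M) g (I : Ideal (𝓞 L)))

theorem card_le_card_fixed_of_surjective (g : Gal(L/M))
    (h : Function.Surjective (classNorm M L)) :
    Nat.card (ClassGroup (𝓞 M)) ≤ Nat.card (galoisClass g / MonoidHom.id _).ker := by
  set l := galoisClass g / MonoidHom.id _
  have hle : l.range ≤ (classNorm M L).ker := by
    rintro _ ⟨c, rfl⟩
    simp [l, MonoidHom.mem_ker, classNorm_galoisClass]
  have h1 : (classNorm M L).ker.index = Nat.card (ClassGroup (𝓞 M)) := by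
    rw [Subgroup.index_ker, MonoidHom.range_eq_top.2 h]
    simp
  have h2 : l.range.index = Nat.card l.ker := by
    have h3 := l.ker.card_mul_index
    rw [Subgroup.index_ker, ← l.range.card_mul_index, mul_comm] at h3
    exact (Nat.eq_of_mul_eq_mul_left Nat.card_pos h3).symm
  rw [← h1, ← h2]
  exact Nat.le_of_dvd (Nat.pos_of_ne_zero Subgroup.index_ne_zero_of_finite)
    (Subgroup.index_dvd_of_le hle)

end NumberField

namespace NumberField

variable {M L : Type} [Field M] [NumberField M] [Field L] [NumberField L] [Algebra M L]
  [IsGalois M L]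

variable (M L) in
/-- The relative norm on units. -/
noncomputable def unitNorm : (𝓞 L)ˣ →* (𝓞 M)ˣ :=
  Units.map (Algebra.intNorm (𝓞 M) (𝓞 L) : 𝓞 L →* 𝓞 M)

theorem coe_unitNorm (u : (𝓞 L)ˣ) :
    (unitNorm M L u : 𝓞 M) = Algebra.intNorm (𝓞 M) (𝓞 L) u := rfl

theorem forall_smul_eq_of_zpowers {g : Gal(L/M)} (hg : ∀ σ, σ ∈ Subgroup.zpowers g)
    {J : Ideal (𝓞 L)} (hJ : g • J = J) (σ : Gal(L/M)) : σ • J = J :=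
  (Subgroup.zpowers_le (H := MulAction.stabilizer Gal(L/M) J)).2 hJ (hg σ)

theorem exists_unit_of_galoisClass_eq (g : Gal(L/M)) (J : (Ideal (𝓞 L))⁰)
    (h : galoisClass g (ClassGroup.mk0 J) = ClassGroup.mk0 J) :
    ∃ (a b : 𝓞 L) (e : (𝓞 M)ˣ), a ≠ 0 ∧ b ≠ 0 ∧
      Ideal.span {a} * g • (J : Ideal (𝓞 L)) = Ideal.span {b} * J ∧
      Algebra.intNorm (𝓞 M) (𝓞 L) b = e * Algebra.intNorm (𝓞 M) (𝓞 L) a := by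
  rw [galoisClass_mk0, ClassGroup.mk0_eq_mk0_iff] at h
  obtain ⟨a, b, ha, hb, hab⟩ := h
  rw [coe_galoisIdeal] at hab
  have hn := congrArg (Ideal.relNorm (𝓞 M)) hab
  rw [map_mul, map_mul, Ideal.relNorm_smul, Ideal.relNorm_singleton, Ideal.relNorm_singleton]
    at hn
  have hJ : Ideal.relNorm (𝓞 M) (J : Ideal (𝓞 L)) ≠ 0 := fun h =>
    nonZeroDivisors.coe_ne_zero J (Ideal.relNorm_eq_bot_iff.1 h)
  obtain ⟨e, he⟩ := Ideal.span_singleton_eq_span_singleton.1 (mul_right_cancel₀ hJ hn)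
  exact ⟨a, b, e, ha, hb, hab, by rw [← he, mul_comm]⟩

/-- An ideal class represented by an ideal `I` with `a • g I = b • I` and `N a = N b` is
extended from the base. -/
theorem mk0_mem_range_extendedHom {g : Gal(L/M)} (hg : ∀ σ, σ ∈ Subgroup.zpowers g)
    (hram : ∀ P : Ideal (𝓞 L), P.IsPrime → P ≠ ⊥ → P.ramificationIdx (𝓞 M) = 1)
    (I : (Ideal (𝓞 L))⁰) {a b : 𝓞 L} (ha : a ≠ 0) (hb : b ≠ 0)
    (hab : Ideal.span {a} * g • (I : Ideal (𝓞 L)) = Ideal.span {b} * I)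
    (hn : Algebra.intNorm (𝓞 M) (𝓞 L) a = Algebra.intNorm (𝓞 M) (𝓞 L) b) :
    ClassGroup.mk0 I ∈ (ClassGroup.extendedHom (𝓞 M) (𝓞 L)).range := by
  obtain ⟨z, hz0, hz⟩ := exists_mul_eq_mul_smul_of_intNorm_eq g hg ha hb hn
  have ha' : Ideal.span {a} ≠ 0 := by simpa using ha
  have hinv : g • (Ideal.span {z} * (I : Ideal (𝓞 L))) = Ideal.span {z} * I := by
    refine mul_left_cancel₀ ha' ?_
    rw [smul_mul', smul_span_singleton, mul_left_comm, hab, ← mul_assoc, ← mul_assoc,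
      Ideal.span_singleton_mul_span_singleton, Ideal.span_singleton_mul_span_singleton, hz,
      mul_comm b]
  have h0 : Ideal.span {z} * (I : Ideal (𝓞 L)) ≠ ⊥ :=
    mul_ne_zero (by simpa using hz0) (nonZeroDivisors.coe_ne_zero I)
  obtain ⟨B, hB⟩ := Ideal.exists_map_eq_of_forall_smul_eq (A := 𝓞 M) (G := Gal(L/M)) hram _ h0
    (forall_smul_eq_of_zpowers hg hinv)
  have hB0 : B ∈ (Ideal (𝓞 M))⁰ := mem_nonZeroDivisors_iff_ne_zero.2 fun h => h0 (by
    rw [← hB, h]; exact Ideal.map_bot)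
  refine ⟨ClassGroup.mk0 ⟨B, hB0⟩, ?_⟩
  rw [ClassGroup.extendedHom_mk0, ClassGroup.mk0_eq_mk0_iff]
  exact ⟨1, z, one_ne_zero, hz0, by simp [hB]⟩

theorem mk0_div_mk0_mem_range_extendedHom {g : Gal(L/M)} (hg : ∀ σ, σ ∈ Subgroup.zpowers g)
    (hram : ∀ P : Ideal (𝓞 L), P.IsPrime → P ≠ ⊥ → P.ramificationIdx (𝓞 M) = 1)
    (J J' : (Ideal (𝓞 L))⁰) {a b a' b' : 𝓞 L} {e e' : (𝓞 M)ˣ} (ha : a ≠ 0) (hb : b ≠ 0)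
    (ha' : a' ≠ 0) (hb' : b' ≠ 0)
    (hab : Ideal.span {a} * g • (J : Ideal (𝓞 L)) = Ideal.span {b} * J)
    (hab' : Ideal.span {a'} * g • (J' : Ideal (𝓞 L)) = Ideal.span {b'} * J')
    (hn : Algebra.intNorm (𝓞 M) (𝓞 L) b = e * Algebra.intNorm (𝓞 M) (𝓞 L) a)
    (hn' : Algebra.intNorm (𝓞 M) (𝓞 L) b' = e' * Algebra.intNorm (𝓞 M) (𝓞 L) a')
    (he : e / e' ∈ (unitNorm M L).range) :
    ClassGroup.mk0 J / ClassGroup.mk0 J' ∈ (ClassGroup.extendedHom (𝓞 M) (𝓞 L)).range := by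
  obtain ⟨u, hu⟩ := he
  obtain ⟨J'', hJ''⟩ := ClassGroup.mk0_surjective (ClassGroup.mk0 J')⁻¹
  rw [div_eq_mul_inv, ← hJ'', ← map_mul]
  obtain ⟨n, hn0, hJn⟩ := ClassGroup.mk0_eq_mk0_inv_iff.1 hJ''
  have hgJn : (g • (J'' : Ideal (𝓞 L))) * (g • (J' : Ideal (𝓞 L))) = Ideal.span {g • n} := by
    rw [← smul_mul', hJn, smul_span_singleton]
  have hgn0 : g • n ≠ 0 := (smul_ne_zero_iff_ne g).2 hn0
  have h2 : Ideal.span {a'} * Ideal.span {g • n} * (J'' : Ideal (𝓞 L)) =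
      Ideal.span {b'} * Ideal.span {n} * g • (J'' : Ideal (𝓞 L)) := by
    rw [← hgJn, ← hJn]
    calc _ = (Ideal.span {a'} * g • (J' : Ideal (𝓞 L))) *
          ((g • (J'' : Ideal (𝓞 L))) * J'') := by ring
      _ = _ := by rw [hab']; ring
  refine mk0_mem_range_extendedHom hg hram (J * J'') (a := a * b' * n * u) (b := b * a' * g • n)
    (mul_ne_zero (mul_ne_zero (mul_ne_zero ha hb') hn0) u.ne_zero)
    (mul_ne_zero (mul_ne_zero hb ha') hgn0) ?_ ?_
  · have hu1 : Ideal.span {(u : 𝓞 L)} = 1 := by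
      rw [Ideal.one_eq_top]
      exact Ideal.span_singleton_eq_top.2 u.isUnit
    simp only [← Ideal.span_singleton_mul_span_singleton, Submonoid.coe_mul, smul_mul', hu1]
    calc _ = (Ideal.span {a} * g • (J : Ideal (𝓞 L))) *
          (Ideal.span {b'} * Ideal.span {n} * g • (J'' : Ideal (𝓞 L))) := by ring
      _ = _ := by rw [hab, ← h2]; ring
  · have hgn : Algebra.intNorm (𝓞 M) (𝓞 L) (g • n) = Algebra.intNorm (𝓞 M) (𝓞 L) n :=
      Algebra.intNorm_map_algEquiv _ n (MulSemiringAction.toAlgEquiv (𝓞 M) (𝓞 L) g)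
    have hee : (e' : 𝓞 M) * Algebra.intNorm (𝓞 M) (𝓞 L) u = e := by
      rw [← coe_unitNorm, hu, ← Units.val_mul, mul_div_cancel]
    simp only [map_mul, hn, hn', hgn, ← hee]
    ring

/-- The number of ambiguous classes modulo those extended from the base. -/
theorem relIndex_range_extendedHom_le {g : Gal(L/M)} (hg : ∀ σ, σ ∈ Subgroup.zpowers g)
    (hram : ∀ P : Ideal (𝓞 L), P.IsPrime → P ≠ ⊥ → P.ramificationIdx (𝓞 M) = 1)
    (hfin : (unitNorm M L).range.index ≠ 0) :
    (ClassGroup.extendedHom (𝓞 M) (𝓞 L)).range.relIndex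
      (galoisClass g / MonoidHom.id _).ker ≤ (unitNorm M L).range.index := by
  have : Finite ((𝓞 M)ˣ ⧸ (unitNorm M L).range) := Subgroup.index_ne_zero_iff_finite.1 hfin
  have key : ∀ c : (galoisClass g / MonoidHom.id (ClassGroup (𝓞 L))).ker,
      ∃ (J : (Ideal (𝓞 L))⁰) (a b : 𝓞 L) (e : (𝓞 M)ˣ), ClassGroup.mk0 J = c ∧ a ≠ 0 ∧ b ≠ 0 ∧
      Ideal.span {a} * g • (J : Ideal (𝓞 L)) = Ideal.span {b} * J ∧
      Algebra.intNorm (𝓞 M) (𝓞 L) b = e * Algebra.intNorm (𝓞 M) (𝓞 L) a := fun ⟨c, hc⟩ => by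
    obtain ⟨J, rfl⟩ := ClassGroup.mk0_surjective c
    refine ⟨J, ?_⟩
    obtain ⟨a, b, e, h⟩ := exists_unit_of_galoisClass_eq g J (div_eq_one.1 hc)
    exact ⟨a, b, e, rfl, h⟩
  choose J a b e hJ ha hb hab hn using key
  refine Subgroup.relIndex_le_card_of_forall _ _ (fun c => (e c : (𝓞 M)ˣ ⧸ _)) fun c c' h => ?_
  rw [← hJ c, ← hJ c']
  exact mk0_div_mk0_mem_range_extendedHom hg hram _ _ (ha c) (hb c) (ha c') (hb c') (hab c)
    (hab c') (hn c) (hn c') (QuotientGroup.eq_iff_div_mem.1 h)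

theorem exists_ideal_of_unitNorm_eq_one {g : Gal(L/M)} (hg : ∀ σ, σ ∈ Subgroup.zpowers g)
    (hram : ∀ P : Ideal (𝓞 L), P.IsPrime → P ≠ ⊥ → P.ramificationIdx (𝓞 M) = 1)
    (u : (𝓞 L)ˣ) (hu : unitNorm M L u = 1) :
    ∃ (z : 𝓞 L) (B : (Ideal (𝓞 M))⁰), z ≠ 0 ∧ u * z = g • z ∧
      (B : Ideal (𝓞 M)).map (algebraMap (𝓞 M) (𝓞 L)) = Ideal.span {z} := by
  obtain ⟨z, hz0, hz⟩ := exists_mul_eq_mul_smul_of_intNorm_eq g hg u.ne_zero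
    (one_ne_zero (α := 𝓞 L)) (by rw [map_one, ← coe_unitNorm, hu, Units.val_one])
  rw [one_mul] at hz
  have h0 : (Ideal.span {z} : Ideal (𝓞 L)) ≠ ⊥ := by simpa using hz0
  have hinv : g • (Ideal.span {z} : Ideal (𝓞 L)) = Ideal.span {z} := by
    rw [smul_span_singleton, ← hz, Ideal.span_singleton_mul_left_unit u.isUnit]
  obtain ⟨B, hB⟩ := Ideal.exists_map_eq_of_forall_smul_eq (A := 𝓞 M) (G := Gal(L/M)) hram _ h0
    (forall_smul_eq_of_zpowers hg hinv)
  have hB0 : B ∈ (Ideal (𝓞 M))⁰ := mem_nonZeroDivisors_iff_ne_zero.2 fun h => h0 (by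
    rw [← hB, h]; exact Ideal.map_bot)
  exact ⟨z, ⟨B, hB0⟩, hz0, hz, hB⟩

/-- The action of a Galois automorphism on units. -/
noncomputable def galoisUnit (g : Gal(L/M)) : (𝓞 L)ˣ →* (𝓞 L)ˣ :=
  Units.map (MulSemiringAction.toRingHom Gal(L/M) (𝓞 L) g : 𝓞 L →* 𝓞 L)

theorem coe_galoisUnit (g : Gal(L/M)) (u : (𝓞 L)ˣ) : (galoisUnit g u : 𝓞 L) = g • (u : 𝓞 L) := rfl

/-- The first cohomology of the units embeds into the capitulation kernel. -/
theorem relIndex_range_galoisUnit_le {g : Gal(L/M)} (hg : ∀ σ, σ ∈ Subgroup.zpowers g)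
    (hram : ∀ P : Ideal (𝓞 L), P.IsPrime → P ≠ ⊥ → P.ramificationIdx (𝓞 M) = 1) :
    (galoisUnit g / MonoidHom.id _).range.relIndex (unitNorm M L).ker ≤
      Nat.card (ClassGroup.extendedHom (𝓞 M) (𝓞 L)).ker := by
  choose z B hz0 hz hB using fun u : (unitNorm M L).ker =>
    exists_ideal_of_unitNorm_eq_one hg hram u.1 u.2
  have hker : ∀ u, ClassGroup.mk0 (B u) ∈ (ClassGroup.extendedHom (𝓞 M) (𝓞 L)).ker := fun u => by
    rw [MonoidHom.mem_ker, ClassGroup.extendedHom_mk0, ClassGroup.mk0_eq_one_iff, hB]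
    exact ⟨_, rfl⟩
  refine Subgroup.relIndex_le_card_of_forall _ _ (fun u => ⟨_, hker u⟩) fun u v h => ?_
  obtain ⟨x, y, hx, hy, hxy⟩ := ClassGroup.mk0_eq_mk0_iff.1 (congrArg Subtype.val h)
  have hxy' := congrArg (Ideal.map (algebraMap (𝓞 M) (𝓞 L))) hxy
  simp only [Ideal.map_mul, Ideal.map_span, Set.image_singleton, hB,
    Ideal.span_singleton_mul_span_singleton] at hxy'
  obtain ⟨w, hw⟩ := Ideal.span_singleton_eq_span_singleton.1 hxy'
  have hgw : algebraMap (𝓞 M) (𝓞 L) x * (u.1 * z u) * g • (w : 𝓞 L) =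
      algebraMap (𝓞 M) (𝓞 L) y * (v.1 * z v) := by
    have := congrArg (g • ·) hw
    simpa only [smul_mul', smul_algebraMap, hz] using this
  refine ⟨w⁻¹, ?_⟩
  rw [MonoidHom.div_apply, MonoidHom.id_apply, map_inv, inv_div_inv, div_eq_div_iff_mul_eq_mul]
  apply Units.ext
  rw [Units.val_mul, Units.val_mul, coe_galoisUnit]
  have h0 : algebraMap (𝓞 M) (𝓞 L) x * z u ≠ 0 :=
    mul_ne_zero (by simpa using hx) (hz0 u)
  refine mul_left_cancel₀ h0 ?_
  linear_combination (v.1 : 𝓞 L) * hw - hgw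

end NumberField

theorem AddSubgroup.index_range_nsmul_le_pow_finrank (A : Type*) [AddCommGroup A]
    [Module.Finite ℤ A] (n : ℕ) (hn : n ≠ 0) (htors : ∀ x : A, n • x = 0 → x = 0) :
    (nsmulAddMonoidHom (α := A) n).range.index ≤ n ^ Module.finrank ℤ A := by
  have : NeZero n := ⟨hn⟩
  let b := Module.finBasis ℤ (A ⧸ Submodule.torsion ℤ A)
  have hr : Module.finrank ℤ (A ⧸ Submodule.torsion ℤ A) = Module.finrank ℤ A := by
    have := Submodule.finrank_quotient_add_finrank (Submodule.torsion ℤ A)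
    have h0 : Module.finrank ℤ (Submodule.torsion ℤ A) = 0 :=
      Module.finrank_eq_zero_iff_isTorsion.2 (Submodule.torsion_isTorsion)
    omega
  have hfin : Finite (Submodule.torsion ℤ A) :=
    Module.finite_of_fg_torsion _ (Submodule.torsion_isTorsion)
  have hdiv : ∀ x ∈ Submodule.torsion ℤ A, ∃ y, n • y = x := fun x hx => by
    have hinj : Function.Injective fun y : Submodule.torsion ℤ A => n • y := fun y z h => by
      refine sub_eq_zero.1 (Subtype.ext (htors _ ?_))
      have := congrArg Subtype.val (sub_eq_zero.2 h)
      simpa [smul_sub] using this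
    obtain ⟨y, hy⟩ := (Finite.injective_iff_surjective.1 hinj) ⟨x, hx⟩
    exact ⟨y, congrArg Subtype.val hy⟩
  rw [← AddSubgroup.relIndex_top_right, ← hr]
  refine (AddSubgroup.relIndex_le_card_of_forall _ _ (T := Fin (Module.finrank ℤ
    (A ⧸ Submodule.torsion ℤ A)) → ZMod n) (fun x j => (b.repr (Submodule.Quotient.mk x.1) j : ZMod n))
    fun x y h => ?_).trans (by simp)
  have hdvd : ∀ j, ∃ c : ℤ, b.repr (Submodule.Quotient.mk (x.1 - y.1)) j = n * c := fun j => by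
    have := (ZMod.intCast_eq_intCast_iff_dvd_sub _ _ _).1 (congrFun h j).symm
    obtain ⟨c, hc⟩ := this
    exact ⟨c, by rw [Submodule.Quotient.mk_sub, map_sub, Finsupp.sub_apply, hc]⟩
  choose c hc using hdvd
  obtain ⟨w, hw⟩ := Submodule.Quotient.mk_surjective _ (b.equivFun.symm c)
  have hmem : (x.1 - y.1) - n • w ∈ Submodule.torsion ℤ A := by
    rw [← Submodule.Quotient.mk_eq_zero, Submodule.Quotient.mk_sub]
    apply b.ext_elem
    intro j
    have h1 : b.repr (Submodule.Quotient.mk w) j = c j := by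
      rw [hw, ← b.equivFun_apply, LinearEquiv.apply_symm_apply]
    have h2 : Submodule.Quotient.mk (p := Submodule.torsion ℤ A) (n • w) =
      n • Submodule.Quotient.mk w := rfl
    rw [map_sub, Finsupp.sub_apply, hc, h2, map_nsmul, Finsupp.smul_apply, h1]
    simp
  obtain ⟨v, hv⟩ := hdiv _ hmem
  exact ⟨w + v, by rw [nsmulAddMonoidHom_apply, smul_add, hv]; abel⟩

namespace NumberField

theorem rank_add_one_of_isTotallyComplex (K : Type*) [Field K] [NumberField K]
    [IsTotallyComplex K] : 2 * (Units.rank K + 1) = Module.finrank ℚ K := by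
  have h1 := IsTotallyComplex.finrank K
  have h2 := InfinitePlace.card_eq_nrRealPlaces_add_nrComplexPlaces K
  have h3 := IsTotallyComplex.nrRealPlaces_eq_zero K
  have h4 : 0 < Module.finrank ℚ K := Module.finrank_pos
  rw [Units.rank]
  omega

variable {M L : Type} [Field M] [NumberField M] [Field L] [NumberField L] [Algebra M L]
  [IsGalois M L]

theorem intNorm_algebraMap (x : 𝓞 M) :
    Algebra.intNorm (𝓞 M) (𝓞 L) (algebraMap (𝓞 M) (𝓞 L) x) = x ^ Module.finrank M L := by
  apply FaithfulSMul.algebraMap_injective (𝓞 M) M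
  rw [Algebra.algebraMap_intNorm (L := L), ← IsScalarTower.algebraMap_apply,
    IsScalarTower.algebraMap_apply (𝓞 M) M L, Algebra.norm_algebraMap, map_pow]

theorem algebraMap_intNorm_eq_prod {g : Gal(L/M)} (hg : ∀ σ, σ ∈ Subgroup.zpowers g)
    (x : 𝓞 L) :
    algebraMap (𝓞 M) (𝓞 L) (Algebra.intNorm (𝓞 M) (𝓞 L) x) =
      ∏ k ∈ Finset.range (Module.finrank M L), g ^ k • x := by
  classical
  apply FaithfulSMul.algebraMap_injective (𝓞 L) L
  rw [map_prod, ← IsScalarTower.algebraMap_apply, IsScalarTower.algebraMap_apply (𝓞 M) M L,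
    Algebra.algebraMap_intNorm (L := L), Algebra.norm_eq_prod_automorphisms,
    ← IsCyclic.image_range_orderOf hg, Finset.prod_image, orderOf_eq_card_of_forall_mem_zpowers hg,
    IsGalois.card_aut_eq_finrank]
  · rfl
  · rw [Finset.coe_range]
    exact pow_injOn_Iio_orderOf

/-- The norm map on class groups of an unramified cyclic extension of degree `5` of a totally
complex field without fifth roots of unity is not surjective. -/
theorem not_surjective_classNorm [IsTotallyComplex M]
    (htors : ∀ u : (𝓞 M)ˣ, u ^ 5 = 1 → u = 1) (hdeg : Module.finrank M L = 5)
    (hram : ∀ P : Ideal (𝓞 L), P.IsPrime → P ≠ ⊥ → P.ramificationIdx (𝓞 M) = 1) :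
    ¬ Function.Surjective (classNorm M L) := by
  intro hsurj
  have hcard : Nat.card Gal(L/M) = 5 := by rw [IsGalois.card_aut_eq_finrank, hdeg]
  have : IsTotallyComplex L := isTotallyComplex_of_algebra M L
  have : Fact (Nat.Prime 5) := ⟨by norm_num⟩
  have : IsCyclic Gal(L/M) := isCyclic_of_prime_card hcard
  obtain ⟨g, hg⟩ := IsCyclic.exists_generator (α := Gal(L/M))
  have hrank : Units.rank L = 5 * Units.rank M + 4 := by
    have h1 := rank_add_one_of_isTotallyComplex M
    have h2 := rank_add_one_of_isTotallyComplex L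
    have h3 := Module.finrank_mul_finrank ℚ M L
    rw [hdeg] at h3
    omega
  obtain ⟨hN0, -, hH⟩ := five_mul_index_range_le_relIndex (E := Additive (𝓞 L)ˣ)
    (F := Additive (𝓞 M)ˣ) (unitNorm M L).toAdditive
    (Units.map (algebraMap (𝓞 M) (𝓞 L) : 𝓞 M →* 𝓞 L)).toAdditive (galoisUnit g).toAdditive
    (fun y => by
      apply Additive.toMul.injective
      apply Units.ext
      exact (intNorm_algebraMap (L := L) (y.toMul : 𝓞 M)).trans (by rw [hdeg]; rfl))
    (fun x => by
      apply Additive.toMul.injective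
      apply Units.ext
      refine (algebraMap_intNorm_eq_prod hg (x.toMul : 𝓞 L)).trans ?_
      rw [hdeg]
      simp only [Finset.prod_range_succ, Finset.prod_range_zero, one_mul, pow_succ, pow_zero,
        mul_smul, one_smul]
      rfl)
    (fun x => by
      apply Additive.toMul.injective
      apply Units.ext
      exact Algebra.intNorm_map_algEquiv _ (x.toMul : 𝓞 L)
        (MulSemiringAction.toAlgEquiv (𝓞 M) (𝓞 L) g))
    (fun y => by
      apply Additive.toMul.injective
      apply Units.ext
      exact smul_algebraMap g (y.toMul : 𝓞 M)) (Units.rank M)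
    ((AddSubgroup.index_range_nsmul_le_pow_finrank _ 5 (by norm_num) fun x hx => htors x.toMul hx).trans
      (by rw [Units.finrank_eq]))
    (by rw [Units.finrank_eq]) (by rw [Units.finrank_eq, hrank])
  change (unitNorm M L).range.toAddSubgroup.index ≠ 0 at hN0
  change 5 * (unitNorm M L).range.toAddSubgroup.index ≤ (galoisUnit g /
    MonoidHom.id (𝓞 L)ˣ).range.toAddSubgroup.relIndex (unitNorm M L).ker.toAddSubgroup at hH
  rw [Subgroup.index_toAddSubgroup] at hN0 hH
  rw [Subgroup.relIndex_toAddSubgroup] at hH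
  have h1 := relIndex_range_galoisUnit_le hg hram
  have h2 := relIndex_range_extendedHom_le hg hram hN0
  have h3 := card_le_card_fixed_of_surjective g hsurj
  set K := (galoisClass g / MonoidHom.id (ClassGroup (𝓞 L))).ker
  set ext := ClassGroup.extendedHom (𝓞 M) (𝓞 L)
  have h4 : Nat.card K ≤ Nat.card ext.range * ext.range.relIndex K := by
    have h5 := Subgroup.card_mul_index (ext.range.subgroupOf K)
    have h6 : Nat.card (ext.range.subgroupOf K) ≤ Nat.card ext.range :=
      Nat.card_le_card_of_injective (fun x => (⟨x.1.1, x.2⟩ : ext.range)) fun x y h =>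
        Subtype.ext (Subtype.ext (Subtype.mk.inj h))
    rw [← h5]
    exact Nat.mul_le_mul_right _ h6
  have h7 : Nat.card ext.ker * Nat.card ext.range = Nat.card (ClassGroup (𝓞 M)) := by
    rw [← Subgroup.index_ker, Subgroup.card_mul_index]
  have hpos : 0 < Nat.card ext.range := Nat.card_pos
  have h8 : Nat.card ext.ker ≤ (unitNorm M L).range.index := by
    refine Nat.le_of_mul_le_mul_left ?_ hpos
    calc _ = Nat.card (ClassGroup (𝓞 M)) := by rw [mul_comm, h7]
      _ ≤ Nat.card ext.range * ext.range.relIndex K := h3.trans h4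
      _ ≤ _ := Nat.mul_le_mul_left _ h2
  omega

end NumberField

theorem Module.exists_injective_or_card_dvd (p : ℕ) [Fact p.Prime] (V : Type*) [AddCommGroup V]
    [Module (ZMod p) V] [Finite V] :
    (∃ f : ZMod p × ZMod p →ₗ[ZMod p] V, Function.Injective f) ∨ Nat.card V ∣ p := by
  have hV : Nat.card V = p ^ Module.finrank (ZMod p) V := by
    rw [Module.natCard_eq_pow_finrank (K := ZMod p), Nat.card_zmod]
  rcases le_or_gt 2 (Module.finrank (ZMod p) V) with h | h
  · left
    have : Nontrivial V := Module.nontrivial_of_finrank_pos (R := ZMod p) (by omega)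
    obtain ⟨x, hx⟩ := exists_ne (0 : V)
    obtain ⟨y, hy⟩ := exists_linearIndependent_pair_of_one_lt_finrank (R := ZMod p) h hx
    refine ⟨(LinearMap.toSpanSingleton (ZMod p) V x).coprod (LinearMap.toSpanSingleton (ZMod p) V y),
      (injective_iff_map_eq_zero _).2 fun z hz => ?_⟩
    exact Prod.ext_iff.2 (LinearIndependent.pair_iff.1 hy z.1 z.2 (by simpa using hz))
  · right
    rw [hV]
    exact (pow_dvd_pow p (Nat.le_of_lt_succ h)).trans (by simp)

theorem CommGroup.exists_injective_or_index_dvd (p : ℕ) [Fact p.Prime] (A : Type*) [CommGroup A]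
    [Finite A] :
    (∃ f : Multiplicative (ZMod p × ZMod p) →* A, Function.Injective f) ∨
      (powMonoidHom p : A →* A).range.index ∣ p := by
  have hcard : (powMonoidHom p : A →* A).range.index = Nat.card (powMonoidHom p : A →* A).ker := by
    have h1 := (powMonoidHom p : A →* A).range.card_mul_index
    have h2 := (powMonoidHom p : A →* A).ker.card_mul_index
    rw [Subgroup.index_ker] at h2
    rw [← h2, mul_comm] at h1
    exact Nat.eq_of_mul_eq_mul_right Nat.card_pos h1
  let V := Additive (powMonoidHom p : A →* A).ker
  let : Module (ZMod p) V := AddCommGroup.zmodModule fun x => Subtype.ext x.toMul.2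
  have : Finite V := inferInstanceAs (Finite (powMonoidHom p : A →* A).ker)
  rcases Module.exists_injective_or_card_dvd p V with ⟨f, hf⟩ | h
  · left
    refine ⟨(powMonoidHom p : A →* A).ker.subtype.comp
      (AddMonoidHom.toMultiplicativeLeft f.toAddMonoidHom), ?_⟩
    exact Subtype.val_injective.comp hf
  · right
    rwa [hcard]

namespace NumberField

variable {M N : Type} [Field M] [NumberField M] [Field N] [NumberField N] [Algebra M N]
  [IsGalois M N]

theorem ramificationIdx_eq_card_inertia (Q : Ideal (𝓞 N)) [Q.IsPrime] (hQ : Q ≠ ⊥) :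
    Q.ramificationIdx (𝓞 M) = Nat.card (Q.inertia Gal(N/M)) := by
  have h0 : Q.under (𝓞 M) ≠ ⊥ := mt Ideal.eq_bot_of_comap_eq_bot hQ
  have : (Q.under (𝓞 M)).IsMaximal := Ideal.IsPrime.isMaximal inferInstance h0
  have : Finite (𝓞 M ⧸ Q.under (𝓞 M)) := Ideal.finiteQuotientOfFreeOfNeBot _ h0
  have : Finite (Q.under (𝓞 M)).ResidueField := inferInstance
  rw [Ideal.card_inertia_eq_ramificationIdxIn (G := Gal(N/M)) (Q.under (𝓞 M)) Q,
    Ideal.ramificationIdxIn_eq_ramificationIdx (Q.under (𝓞 M)) Q Gal(N/M)]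

variable (L : IntermediateField M N)

/-- A prime of an intermediate field is unramified over the base as soon as the inertia group of
some prime above it acts trivially on the intermediate field. -/
theorem ramificationIdx_eq_one_of_inertia_le (P : Ideal (𝓞 L)) [P.IsPrime] (hP : P ≠ ⊥)
    (Q : Ideal (𝓞 N)) [Q.IsPrime] [Q.LiesOver P]
    (hI : Q.inertia Gal(N/M) ≤ L.fixingSubgroup) : P.ramificationIdx (𝓞 M) = 1 := by
  have hQ : Q ≠ ⊥ := Ideal.ne_bot_of_liesOver_of_ne_bot hP Q
  have h1 := ramificationIdx_eq_card_inertia (M := M) Q hQ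
  have h2 := ramificationIdx_eq_card_inertia (M := L) Q hQ
  have h3 := Ideal.ramificationIdx_tower (R := 𝓞 M) P Q
  have h4 : Nat.card (Q.inertia Gal(N/M)) ≤ Nat.card (Q.inertia Gal(N/L)) :=
    Nat.card_le_card_of_injective
      (fun σ => (⟨IntermediateField.fixingSubgroupEquiv L ⟨σ.1, hI σ.2⟩, σ.2⟩ :
        Q.inertia Gal(N/L))) fun σ τ h => by
      have := (IntermediateField.fixingSubgroupEquiv L).injective (Subtype.mk.inj h)
      exact Subtype.ext (Subtype.mk.inj this)
  have h5 : 0 < Nat.card (Q.inertia Gal(N/L)) := Nat.card_pos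
  have h6 : 0 < Nat.card (Q.inertia Gal(N/M)) := Nat.card_pos
  rw [h1, h2] at h3
  have h7 : P.ramificationIdx (𝓞 M) ≠ 0 := fun h => by rw [h, zero_mul] at h3; omega
  nlinarith [Nat.pos_of_ne_zero h7]

theorem inertiaDeg_eq_one_of_forall_pow_sub_mem {K L : Type} [Field K] [NumberField K] [Field L]
    [NumberField L] [Algebra K L] (P : Ideal (𝓞 L)) [P.IsMaximal] (hP : P ≠ ⊥)
    (h : ∀ z : 𝓞 L, z ^ Nat.card (𝓞 K ⧸ P.under (𝓞 K)) - z ∈ P) : P.inertiaDeg (𝓞 K) = 1 := by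
  have h0 : P.under (𝓞 K) ≠ ⊥ := mt Ideal.eq_bot_of_comap_eq_bot hP
  have : (P.under (𝓞 K)).IsMaximal := Ideal.IsPrime.isMaximal inferInstance h0
  have : Finite (𝓞 K ⧸ P.under (𝓞 K)) := Ideal.finiteQuotientOfFreeOfNeBot _ h0
  have : Finite (𝓞 L ⧸ P) := Ideal.finiteQuotientOfFreeOfNeBot _ hP
  have h1 := Ideal.cardQuot_pow_inertiaDeg (P.under (𝓞 K)) P
  change Nat.card (𝓞 K ⧸ P.under (𝓞 K)) ^ _ = Nat.card (𝓞 L ⧸ P) at h1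
  set q := Nat.card (𝓞 K ⧸ P.under (𝓞 K))
  have hq : 1 < q := Finite.one_lt_card
  let : Field (𝓞 L ⧸ P) := Ideal.Quotient.field P
  have h2 : Nat.card (𝓞 L ⧸ P) ≤ q := by
    classical
    let : Fintype (𝓞 L ⧸ P) := Fintype.ofFinite _
    have hX := FiniteField.X_pow_card_sub_X_ne_zero (𝓞 L ⧸ P) hq
    have hsub : (Finset.univ : Finset (𝓞 L ⧸ P)) ⊆
        (Polynomial.X ^ q - Polynomial.X : Polynomial (𝓞 L ⧸ P)).roots.toFinset := fun z _ => by
      obtain ⟨z, rfl⟩ := Ideal.Quotient.mk_surjective z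
      rw [Multiset.mem_toFinset, Polynomial.mem_roots hX]
      have := Ideal.Quotient.eq_zero_iff_mem.2 (h z)
      simpa [Polynomial.IsRoot] using this
    calc Nat.card (𝓞 L ⧸ P) = (Finset.univ : Finset (𝓞 L ⧸ P)).card := by
          rw [Nat.card_eq_fintype_card, Finset.card_univ]
      _ ≤ _ := Finset.card_le_card hsub
      _ ≤ _ := Multiset.toFinset_card_le _
      _ ≤ _ := Polynomial.card_roots' _
      _ = q := FiniteField.X_pow_card_sub_X_natDegree_eq _ hq
  have h3 : P.inertiaDeg (𝓞 K) ≤ 1 := by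
    rw [← h1] at h2
    exact (Nat.pow_le_pow_iff_right hq).1 (h2.trans_eq (pow_one q).symm)
  have h4 : P.inertiaDeg (𝓞 K) ≠ 0 := fun h => by
    rw [h, pow_zero] at h1
    exact absurd h1 (Finite.one_lt_card (α := 𝓞 L ⧸ P)).ne
  omega

end NumberField

namespace NumberField

variable {M N : Type} [Field M] [NumberField M] [Field N] [NumberField N] [Algebra M N]
  [IsGalois M N]

theorem range_powMonoidHom_finrank_le_range_classNorm (M L : Type) [Field M] [NumberField M] [Field L]
    [NumberField L] [Algebra M L] [IsGalois M L] :
    (powMonoidHom (Module.finrank M L) : ClassGroup (𝓞 M) →* ClassGroup (𝓞 M)).range ≤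
      (classNorm M L).range := by
  rintro _ ⟨c, rfl⟩
  obtain ⟨I, rfl⟩ := ClassGroup.mk0_surjective c
  refine ⟨ClassGroup.extendedHom (𝓞 M) (𝓞 L) (ClassGroup.mk0 I), ?_⟩
  rw [ClassGroup.extendedHom_mk0, classNorm_mk0, powMonoidHom_apply, ← map_pow]
  congr 1
  apply Subtype.ext
  exact (Ideal.relNorm_algebraMap (𝓞 L) (I : Ideal (𝓞 M))).trans
    (by rw [IsFractionRing.finrank_eq (𝓞 M) M (𝓞 L) L]; rfl)

/-- If the Frobenius of a prime `Q` acts trivially on an intermediate field then the class of the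
prime below `Q` is a norm from that field. -/
theorem mk0_under_mem_range_classNorm (L : IntermediateField M N) [IsGalois M L]
    (Q : Ideal (𝓞 N)) [Q.IsMaximal] (hQ : Q ≠ ⊥) (φ : Gal(N/M)) (hφ : IsArithFrobAt (𝓞 M) φ Q)
    (hL : φ ∈ L.fixingSubgroup) (p : (Ideal (𝓞 M))⁰) (hp : (p : Ideal (𝓞 M)) = Q.under (𝓞 M)) :
    ClassGroup.mk0 p ∈ (classNorm M L).range := by
  have h0 : Q.under (𝓞 L) ≠ ⊥ := mt Ideal.eq_bot_of_comap_eq_bot hQ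
  have : (Q.under (𝓞 L)).IsMaximal := Ideal.IsPrime.isMaximal inferInstance h0
  have h1 : (Q.under (𝓞 L)).under (𝓞 M) ≠ ⊥ := mt Ideal.eq_bot_of_comap_eq_bot h0
  have : ((Q.under (𝓞 L)).under (𝓞 M)).IsMaximal := Ideal.IsPrime.isMaximal inferInstance h1
  have hu : (Q.under (𝓞 L)).under (𝓞 M) = Q.under (𝓞 M) := Ideal.under_under Q
  have hdeg : (Q.under (𝓞 L)).inertiaDeg (𝓞 M) = 1 := by
    refine inertiaDeg_eq_one_of_forall_pow_sub_mem _ h0 fun z => ?_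
    have h2 := hφ (algebraMap (𝓞 L) (𝓞 N) z)
    have h3 : φ • algebraMap (𝓞 L) (𝓞 N) z = algebraMap (𝓞 L) (𝓞 N) z :=
      RingOfIntegers.ext (hL (z : L))
    change φ • algebraMap (𝓞 L) (𝓞 N) z - _ ∈ Q at h2
    rw [hu, Ideal.under, Ideal.mem_comap, map_sub, map_pow, ← neg_mem_iff, neg_sub]
    rwa [h3] at h2
  refine ⟨ClassGroup.mk0 ⟨Q.under (𝓞 L), mem_nonZeroDivisors_iff_ne_zero.2 h0⟩, ?_⟩
  rw [classNorm_mk0]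
  congr 1
  apply Subtype.ext
  have h5 := Ideal.relNorm_eq_pow_of_isMaximal (Q.under (𝓞 L)) ((Q.under (𝓞 L)).under (𝓞 M))
  rw [hdeg, pow_one, hu, ← hp] at h5
  exact h5

theorem not_surjective_classNorm_fixedField [IsTotallyComplex M]
    (htors : ∀ u : (𝓞 M)ˣ, u ^ 5 = 1 → u = 1) (χ : Gal(N/M) →* Multiplicative (ZMod 5))
    (hχ : Function.Surjective χ)
    (hI : ∀ Q : Ideal (𝓞 N), Q.IsPrime → Q ≠ ⊥ → Q.inertia Gal(N/M) ≤ χ.ker) :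
    Module.finrank M (IntermediateField.fixedField χ.ker) = 5 ∧
      ¬ Function.Surjective (classNorm M (IntermediateField.fixedField χ.ker)) := by
  have hdeg : Module.finrank M (IntermediateField.fixedField χ.ker) = 5 := by
    rw [IntermediateField.finrank_eq_fixingSubgroup_index,
      IntermediateField.fixingSubgroup_fixedField, Subgroup.index_ker, χ.range_eq_top.2 hχ]
    simp
  refine ⟨hdeg, not_surjective_classNorm htors hdeg fun P hP hP0 => ?_⟩
  have := hP.isMaximal hP0
  obtain ⟨Q, hQ, hQP⟩ := Ideal.exists_maximal_ideal_liesOver_of_isIntegral (S := 𝓞 N) P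
  refine ramificationIdx_eq_one_of_inertia_le _ P hP0 Q ?_
  rw [IntermediateField.fixingSubgroup_fixedField]
  exact hI Q hQ.isPrime (Ideal.ne_bot_of_liesOver_of_ne_bot hP0 Q)

/-- Let `N / M` be Galois with `M` totally complex without fifth roots of unity. If the Galois group
has a quotient `(ℤ/5)²` in which all inertia groups are trivial then the class group of `M` contains
`(ℤ/5)²`. -/
theorem exists_injective_classGroup_of_surjective [IsTotallyComplex M]
    (htors : ∀ u : (𝓞 M)ˣ, u ^ 5 = 1 → u = 1)
    (π : Gal(N/M) →* Multiplicative (ZMod 5 × ZMod 5)) (hπ : Function.Surjective π)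
    (hI : ∀ Q : Ideal (𝓞 N), Q.IsPrime → Q ≠ ⊥ → Q.inertia Gal(N/M) ≤ π.ker) :
    ∃ f : Multiplicative (ZMod 5 × ZMod 5) →* ClassGroup (𝓞 M), Function.Injective f := by
  have : Fact (Nat.Prime 5) := ⟨by norm_num⟩
  refine (CommGroup.exists_injective_or_index_dvd 5 (ClassGroup (𝓞 M))).resolve_right fun hdvd => ?_
  set H := (powMonoidHom 5 : ClassGroup (𝓞 M) →* ClassGroup (𝓞 M)).range
  let c : ZMod 5 → ZMod 5 → (ZMod 5 × ZMod 5 →+ ZMod 5) := fun a b =>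
    (AddMonoidHom.mulLeft a).coprod (AddMonoidHom.mulLeft b)
  let χ : ZMod 5 → ZMod 5 → (Gal(N/M) →* Multiplicative (ZMod 5)) := fun a b =>
    (AddMonoidHom.toMultiplicative (c a b)).comp π
  have hc : ∀ a b, (a ≠ 0 ∨ b ≠ 0) → Function.Surjective (c a b) := fun a b hab y => by
    rcases hab with h | h
    · exact ⟨(a⁻¹ * y, 0), by simp [c, h]⟩
    · exact ⟨(0, b⁻¹ * y), by simp [c, h]⟩
  have hker : ∀ a b, π.ker ≤ (χ a b).ker := fun a b σ hσ => by
    rw [MonoidHom.mem_ker] at hσ ⊢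
    rw [MonoidHom.comp_apply, hσ, map_one]
  have hmain : ∀ a b, (a ≠ 0 ∨ b ≠ 0) →
      (classNorm M (IntermediateField.fixedField (χ a b).ker)).range = H ∧
      (classNorm M (IntermediateField.fixedField (χ a b).ker)).range ≠ ⊤ := fun a b hab => by
    obtain ⟨hdeg, hns⟩ := not_surjective_classNorm_fixedField htors (χ a b)
      ((hc a b hab).comp hπ) fun Q hQ hQ0 => (hI Q hQ hQ0).trans (hker a b)
    set R := (classNorm M (IntermediateField.fixedField (χ a b).ker)).range with hR
    have hRtop : R ≠ ⊤ := fun h => hns (MonoidHom.range_eq_top.1 h)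
    refine ⟨?_, hRtop⟩
    have hHR : H ≤ R := by
      have := range_powMonoidHom_finrank_le_range_classNorm M
        (IntermediateField.fixedField (χ a b).ker)
      rwa [hdeg] at this
    have h1 : H.relIndex R * R.index = H.index := Subgroup.relIndex_mul_index hHR
    have h2 : R.index ≠ 1 := mt Subgroup.index_eq_one.1 hRtop
    have h3 : R.index = 5 := ((Nat.dvd_prime Fact.out).1
      ((Dvd.intro_left _ h1).trans hdvd)).resolve_left h2
    have h4 : H.index = 5 := ((Nat.dvd_prime Fact.out).1 hdvd).resolve_left fun h => by
      rw [h, h3] at h1; omega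
    refine le_antisymm (Subgroup.relIndex_eq_one.1 ?_) hHR
    rw [h3, h4] at h1
    omega
  have hprime : ∀ (p : Ideal (𝓞 M)) (hp : p ∈ (Ideal (𝓞 M))⁰), Prime p →
      ClassGroup.mk0 ⟨p, hp⟩ ∈ H := fun p hp hpp => by
    have hp0 : p ≠ ⊥ := mem_nonZeroDivisors_iff_ne_zero.1 hp
    have := (Ideal.isPrime_of_prime hpp).isMaximal hp0
    obtain ⟨Q, hQ, hQp⟩ := Ideal.exists_maximal_ideal_liesOver_of_isIntegral (S := 𝓞 N) p
    have hQ0 : Q ≠ ⊥ := Ideal.ne_bot_of_liesOver_of_ne_bot hp0 Q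
    have : Finite (𝓞 N ⧸ Q) := Ideal.finiteQuotientOfFreeOfNeBot _ hQ0
    obtain ⟨φ, hφ⟩ := IsArithFrobAt.exists_of_isInvariant (𝓞 M) Gal(N/M) Q
    obtain ⟨a, b, hab, hφab⟩ : ∃ a b : ZMod 5, (a ≠ 0 ∨ b ≠ 0) ∧ φ ∈ (χ a b).ker := by
      by_cases h : (π φ).toAdd.1 = 0
      · refine ⟨1, 0, Or.inl one_ne_zero, Multiplicative.toAdd.injective ?_⟩
        simp [χ, c, h]
      · refine ⟨(π φ).toAdd.2, -(π φ).toAdd.1, Or.inr (neg_ne_zero.2 h),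
          Multiplicative.toAdd.injective ?_⟩
        simp [χ, c, mul_comm]
    rw [← (hmain a b hab).1]
    exact mk0_under_mem_range_classNorm _ Q hQ0 φ hφ
      (by rwa [IntermediateField.fixingSubgroup_fixedField]) _ hQp.over
  have hall : ∀ (I : Ideal (𝓞 M)) (hI : I ∈ (Ideal (𝓞 M))⁰), ClassGroup.mk0 ⟨I, hI⟩ ∈ H := by
    intro I
    induction I using UniqueFactorizationMonoid.induction_on_prime with
    | h₁ => exact fun hI => absurd rfl (mem_nonZeroDivisors_iff_ne_zero.1 hI)
    | h₂ I hu =>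
      intro hI
      have : (⟨I, hI⟩ : (Ideal (𝓞 M))⁰) = 1 := Subtype.ext ((Ideal.isUnit_iff.1 hu).trans Ideal.one_eq_top.symm)
      rw [this, map_one]
      exact one_mem _
    | h₃ I p hI0 hp ih =>
      intro hI
      have hp' : p ∈ (Ideal (𝓞 M))⁰ := mem_nonZeroDivisors_iff_ne_zero.2 hp.ne_zero
      have hI' : I ∈ (Ideal (𝓞 M))⁰ := mem_nonZeroDivisors_iff_ne_zero.2 hI0
      have : (⟨p * I, hI⟩ : (Ideal (𝓞 M))⁰) = ⟨p, hp'⟩ * ⟨I, hI'⟩ := rfl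
      rw [this, map_mul]
      exact mul_mem (hprime p hp' hp) (ih hI')
  obtain ⟨hR, hRtop⟩ := hmain 1 0 (Or.inl one_ne_zero)
  refine hRtop (hR.trans (top_le_iff.1 fun x _ => ?_))
  obtain ⟨I, rfl⟩ := ClassGroup.mk0_surjective x
  exact hall I I.2

end NumberField

/-- Multiplication by the unit `(123 + 11 √125) / 2` in the coordinates
`(u, v) ↦ u + v (1 + √125) / 2`. -/
def pellStep (x : ℕ × ℕ) : ℕ × ℕ := (56 * x.1 + 341 * x.2, 11 * x.1 + 67 * x.2)

/-- The reduction of `pellStep` modulo `n`. -/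
def pellStepMod (n : ℕ) (x : ℕ × ℕ) : ℕ × ℕ :=
  ((56 * x.1 + 341 * x.2) % n, (11 * x.1 + 67 * x.2) % n)

theorem pellStep_iterate_mod (n k : ℕ) (x : ℕ × ℕ) :
    Prod.map (· % n) (· % n) (pellStep^[k] x) =
      (pellStepMod n)^[k] (Prod.map (· % n) (· % n) x) := by
  refine (Function.Semiconj.iterate_right (f := Prod.map (· % n) (· % n)) (fun y => ?_) k) x
  simp [pellStep, pellStepMod, Prod.map, Nat.add_mod, Nat.mul_mod]

theorem pellStep_iterate_mod_of_period {n m : ℕ} (hn : 1 < n)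
    (h : (pellStepMod n)^[m] (1, 0) = (1, 0)) (k : ℕ) :
    ((pellStep^[k] (1, 0)).1 % n, (pellStep^[k] (1, 0)).2 % n) =
      (pellStepMod n)^[k % m] (1, 0) := by
  have h1 := pellStep_iterate_mod n k (1, 0)
  simp only [Prod.map_apply, Nat.mod_eq_of_lt hn, Nat.zero_mod] at h1
  rw [Function.IsPeriodicPt.iterate_mod_apply (n := m) h, ← h1]
  rfl

theorem exists_eq_pellStep_iterate (v : ℕ) : ∀ u : ℕ, (u : ℤ) ^ 2 + u * v - 31 * v ^ 2 = 1 →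
    ∃ k, (u, v) = pellStep^[k] (1, 0) := by
  induction v using Nat.strong_induction_on with
  | _ v ih =>
    intro u h
    rcases Nat.eq_zero_or_pos v with rfl | hv
    · refine ⟨0, ?_⟩
      have : (u : ℤ) = 1 := by
        have : (0 : ℤ) ≤ u := by positivity
        push_cast at h
        nlinarith
      have : u = 1 := by exact_mod_cast this
      simp [this]
    have hv' : (1 : ℤ) ≤ v := by exact_mod_cast hv
    have hu : (0 : ℤ) ≤ u := by positivity
    have h1 : 5 * (v : ℤ) < u := by nlinarith
    rcases lt_or_ge v 11 with h11 | h11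
    · have hu7 : u < 6 * v := by
        have : (u : ℤ) < 6 * v := by nlinarith
        exact_mod_cast this
      exfalso
      interval_cases v <;> interval_cases u <;> simp at h
    · have h11' : (11 : ℤ) ≤ v := by exact_mod_cast h11
      have h2 : 11 * (u : ℤ) ≤ 56 * v := by nlinarith
      have h3 : 341 * (v : ℤ) ≤ 67 * u := by nlinarith
      obtain ⟨k, hk⟩ := ih (56 * v - 11 * u) (by omega) (67 * u - 341 * v) (by
        rw [Nat.cast_sub (by omega), Nat.cast_sub (by omega)]
        push_cast
        linear_combination h)
      refine ⟨k + 1, ?_⟩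
      rw [Function.iterate_succ_apply', ← hk]
      simp only [pellStep, Prod.mk.injEq]
      omega

/-- The prime `p` witnesses that the Kummer characters attached to the units with traces `t` and
`t'` take the values `n` and `n'` on some Frobenius element, up to sign and a common factor. -/
def HasKummerWitness (t t' : ℤ) (n n' : ℕ) : Prop :=
  ∃ p : ℕ, p.Prime ∧ 5 ∣ p - 1 ∧ ∃ e e' c : ZMod p, c ^ 5 = 1 ∧ c ≠ 1 ∧
    e ^ 2 - t * e + 1 = 0 ∧ 2 * e ≠ t ∧ e' ^ 2 - t' * e' + 1 = 0 ∧
    e ^ ((p - 1) / 5) = c ^ n ∧ e' ^ ((p - 1) / 5) = c ^ n'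

theorem hasKummerWitness_of_mod {p u v : ℕ} {n n' : ℕ} (x : ℕ × ℕ) (hx : (u % p, v % p) = x)
    (hp : p.Prime) (h5 : 5 ∣ p - 1) (e e' c : ℕ) (hc : c ^ 5 % p = 1) (hc1 : c < p ∧ c ≠ 1)
    (he : (e ^ 2 + 1) % p = (2 * x.1 + 2 * x.2) * e % p)
    (he2 : 2 * e % p ≠ (2 * x.1 + 2 * x.2) % p)
    (he' : (e' ^ 2 + 1) % p = (2 * x.1 + 126 * x.2) * e' % p)
    (hn : e ^ ((p - 1) / 5) % p = c ^ n % p) (hn' : e' ^ ((p - 1) / 5) % p = c ^ n' % p) :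
    HasKummerWitness (2 * u + 2 * v) (2 * u + 126 * v) n n' := by
  subst hx
  have hu : ((u % p : ℕ) : ZMod p) = u := by simp
  have hv : ((v % p : ℕ) : ZMod p) = v := by simp
  have key : ∀ {a b : ℕ}, a % p = b % p → (a : ZMod p) = b := fun h =>
    (ZMod.natCast_eq_natCast_iff' _ _ _).2 h
  have h1p := hp.one_lt
  refine ⟨p, hp, h5, e, e', c, ?_, ?_, ?_, ?_, ?_, ?_, ?_⟩
  · exact_mod_cast key (a := c ^ 5) (b := 1) (by rw [hc, Nat.mod_eq_of_lt h1p])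
  · intro h
    have := (ZMod.natCast_eq_natCast_iff' c 1 p).1 (by simpa using h)
    rw [Nat.mod_eq_of_lt hc1.1, Nat.mod_eq_of_lt h1p] at this
    exact hc1.2 this
  · have := key he
    push_cast [hu, hv] at this ⊢
    linear_combination this
  · intro h
    refine he2 ((ZMod.natCast_eq_natCast_iff' _ _ _).1 ?_)
    push_cast [hu, hv] at h ⊢
    exact h
  · have := key he'
    push_cast [hu, hv] at this ⊢
    linear_combination this
  · simpa using key hn
  · simpa using key hn'

theorem exists_hasKummerWitness {u v : ℕ} (h : (u : ℤ) ^ 2 + u * v - 31 * v ^ 2 = 1)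
    (h25 : 25 ∣ u + v) : ∃ n₁ n₁' n₂ n₂' : ℕ,
      HasKummerWitness (2 * u + 2 * v) (2 * u + 126 * v) n₁ n₁' ∧
      HasKummerWitness (2 * u + 2 * v) (2 * u + 126 * v) n₂ n₂' ∧
      ((n₁ : ZMod 5) * n₂') ^ 2 ≠ (n₂ * n₁') ^ 2 := by
  obtain ⟨k, hk⟩ := exists_eq_pellStep_iterate v u h
  obtain ⟨rfl, rfl⟩ := Prod.mk.inj hk
  have h50 := pellStep_iterate_mod_of_period (n := 25) (m := 50) (by norm_num) (by decide +kernel) k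
  have hk50 : k % 50 = 7 ∨ k % 50 = 32 := by
    have hlt : k % 50 < 50 := Nat.mod_lt _ (by norm_num)
    have hall : ∀ j < 50, ((pellStepMod 25)^[j] (1, 0)).1 + ((pellStepMod 25)^[j] (1, 0)).2 ≡ 0
        [MOD 25] → j = 7 ∨ j = 32 := by decide +kernel
    refine hall _ hlt ?_
    rw [← h50]
    exact ((Nat.mod_modEq _ _).add (Nat.mod_modEq _ _)).trans (Nat.modEq_zero_iff_dvd.2 h25)
  have h2251 := pellStep_iterate_mod_of_period (n := 2251) (m := 75) (by norm_num)
    (by decide +kernel) k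
  have h751 := pellStep_iterate_mod_of_period (n := 751) (m := 75) (by norm_num)
    (by decide +kernel) k
  have h12301 := pellStep_iterate_mod_of_period (n := 12301) (m := 15) (by norm_num)
    (by decide +kernel) k
  have h18451 := pellStep_iterate_mod_of_period (n := 18451) (m := 15) (by norm_num)
    (by decide +kernel) k
  have hk75 : k % 75 = 7 ∨ k % 75 = 57 ∨ k % 75 = 32 := by omega
  rcases hk75 with hk | hk | hk
  · rw [hk] at h2251
    rw [show k % 15 = 7 by omega] at h12301
    refine ⟨1, 0, 1, 2,
      hasKummerWitness_of_mod _ h2251 (by norm_num) (by norm_num) 1483 838 2232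
        ?_ ?_ ?_ ?_ ?_ ?_ ?_,
      hasKummerWitness_of_mod _ h12301 (by norm_num) (by norm_num) 3166 9900 10095
        ?_ ?_ ?_ ?_ ?_ ?_ ?_, ?_⟩ <;> decide +kernel
  · rw [hk] at h2251
    rw [show k % 15 = 12 by omega] at h18451
    refine ⟨1, 0, 1, 1,
      hasKummerWitness_of_mod _ h2251 (by norm_num) (by norm_num) 1397 1199 2014
        ?_ ?_ ?_ ?_ ?_ ?_ ?_,
      hasKummerWitness_of_mod _ h18451 (by norm_num) (by norm_num) 2919 9056 844
        ?_ ?_ ?_ ?_ ?_ ?_ ?_, ?_⟩ <;> decide +kernel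
  · rw [hk] at h751
    rw [show k % 15 = 2 by omega] at h18451
    refine ⟨1, 3, 1, 4,
      hasKummerWitness_of_mod _ h751 (by norm_num) (by norm_num) 38 431 460
        ?_ ?_ ?_ ?_ ?_ ?_ ?_,
      hasKummerWitness_of_mod _ h18451 (by norm_num) (by norm_num) 6577 4245 844
        ?_ ?_ ?_ ?_ ?_ ?_ ?_, ?_⟩ <;> decide +kernel

section KummerHom

variable {M N : Type*} [Field M] [Field N] [Algebra M N] {ζ θ : N}

theorem IsPrimitiveRoot.zpow_eq_zpow_iff_zmod {n : ℕ} (hζ : IsPrimitiveRoot ζ n) (hn : n ≠ 0)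
    (a b : ℤ) : ζ ^ a = ζ ^ b ↔ (a : ZMod n) = b := by
  rw [← sub_eq_zero (a := (a : ZMod n)), ← Int.cast_sub, ZMod.intCast_zmod_eq_zero_iff_dvd,
    ← hζ.zpow_eq_one_iff_dvd, zpow_sub₀ (hζ.ne_zero hn),
    div_eq_one_iff_eq (zpow_ne_zero _ (hζ.ne_zero hn))]

/-- The Kummer character of `θ`, for a group acting on `ζ` and `θ` through inversion up to fifth
roots of unity. -/
theorem exists_kummerHom (hζ : IsPrimitiveRoot ζ 5) (hθ : θ ≠ 0)
    (h : ∀ σ : Gal(N/M), (σ ζ = ζ ∧ ∃ k : ℕ, σ θ = ζ ^ k * θ) ∨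
      (σ ζ = ζ⁻¹ ∧ ∃ k : ℕ, σ θ * θ = ζ ^ k)) :
    ∃ π : Gal(N/M) →* Multiplicative (ZMod 5), ∀ (σ : Gal(N/M)) (k : ℕ), σ ζ = ζ →
      σ θ = ζ ^ k * θ → π σ = Multiplicative.ofAdd (k : ZMod 5) := by
  have hζ0 : ζ ≠ 0 := hζ.ne_zero (by norm_num)
  have h1 : ∀ σ : Gal(N/M), ∃ s k : ℤ, (s = 1 ∨ s = -1) ∧ σ ζ = ζ ^ s ∧ σ θ ^ s = ζ ^ k * θ := by
    intro σ
    rcases h σ with ⟨h1, k, h2⟩ | ⟨h1, k, h2⟩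
    · exact ⟨1, k, Or.inl rfl, by simpa using h1, by simpa using h2⟩
    · refine ⟨-1, -k, Or.inr rfl, by simpa using h1, ?_⟩
      rw [zpow_neg, zpow_neg, zpow_one, zpow_natCast, ← h2, mul_inv, mul_assoc,
        inv_mul_cancel₀ hθ, mul_one]
  have huniq : ∀ (σ : Gal(N/M)) (s s' k k' : ℤ), (s = 1 ∨ s = -1) → (s' = 1 ∨ s' = -1) →
      σ ζ = ζ ^ s → σ ζ = ζ ^ s' → σ θ ^ s = ζ ^ k * θ → σ θ ^ s' = ζ ^ k' * θ →
      (k : ZMod 5) = k' := by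
    intro σ s s' k k' hs hs' h1 h2 h3 h4
    have h5 : s = s' := by
      have := (hζ.zpow_eq_zpow_iff_zmod (by norm_num) s s').1 (h1.symm.trans h2)
      rcases hs with rfl | rfl <;> rcases hs' with rfl | rfl <;> first | rfl | (revert this; decide)
    subst h5
    exact (hζ.zpow_eq_zpow_iff_zmod (by norm_num) k k').1 (mul_right_cancel₀ hθ (h3.symm.trans h4))
  choose s k hs hsζ hk using h1
  refine ⟨MonoidHom.mk' (fun σ => Multiplicative.ofAdd (k σ : ZMod 5)) fun σ τ => ?_,
    fun σ j h2 h3 => ?_⟩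
  · rw [← ofAdd_add, ← Int.cast_add]
    refine congrArg _ (huniq (σ * τ) (s (σ * τ)) (s σ * s τ) _ _ (hs _) ?_ (hsζ _) ?_ (hk _) ?_)
    · rcases hs σ with h | h <;> rcases hs τ with h' | h' <;> simp [h, h']
    · rw [AlgEquiv.mul_apply, hsζ τ, map_zpow₀, hsζ σ, zpow_mul]
    · have hss : s σ * s σ = 1 := by rcases hs σ with h | h <;> simp [h]
      rw [AlgEquiv.mul_apply, mul_comm (s σ), zpow_mul, ← map_zpow₀ σ, hk τ, map_mul, map_zpow₀,
        hsζ σ, mul_zpow, hk σ, ← zpow_mul, ← zpow_mul, mul_left_comm (s σ), hss, mul_one, ← mul_assoc,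
        zpow_add₀ hζ0, mul_comm (ζ ^ k σ)]
  · refine congrArg Multiplicative.ofAdd ?_
    have := huniq σ (s σ) 1 (k σ) j (hs σ) (Or.inl rfl) (hsζ σ) (by simpa using h2) (hk σ)
      (by simpa using h3)
    simpa using this

end KummerHom

namespace NumberField

variable {M N : Type} [Field M] [NumberField M] [Field N] [NumberField N] [Algebra M N]

/-- A Kummer character whose radical `θ` satisfies `ζ - 1 ∣ θ - θ ^ 5` is unramified. -/
theorem kummerHom_eq_one_of_mem_inertia {ζ θ : 𝓞 N} (hζ : IsPrimitiveRoot ζ 5) (hθ : IsUnit θ)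
    (π : Gal(N/M) →* Multiplicative (ZMod 5))
    (h : ∀ σ : Gal(N/M), σ • ζ = ζ → ∃ k : ℕ, σ • θ = ζ ^ k * θ ∧
      π σ = Multiplicative.ofAdd (k : ZMod 5)) (hsq : ∀ σ : Gal(N/M), (σ ^ 2) • ζ = ζ)
    (hdvd : ζ - 1 ∣ θ - θ ^ 5) (Q : Ideal (𝓞 N)) (hQ : Q.IsPrime) :
    Q.inertia Gal(N/M) ≤ π.ker := by
  have key : ∀ σ ∈ Q.inertia Gal(N/M), σ • ζ = ζ → π σ = 1 := by
    intro σ hσ hσζ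
    obtain ⟨k, hk, hπ⟩ := h σ hσζ
    by_cases hk5 : 5 ∣ k
    · rw [hπ, (ZMod.natCast_eq_zero_iff k 5).2 hk5, ofAdd_zero]
    exfalso
    have hcop : k.Coprime 5 := ((Nat.Prime.coprime_iff_not_dvd (by norm_num)).2 hk5).symm
    obtain ⟨u, hu⟩ := hζ.associated_sub_one_pow_sub_one_of_coprime hcop
    obtain ⟨y, hy⟩ := hdvd
    have hne : ζ - 1 ≠ 0 := sub_ne_zero.2 (hζ.ne_one (by norm_num))
    have h5 : (ζ ^ k) ^ 5 = 1 := by rw [← pow_mul, mul_comm, pow_mul, hζ.pow_eq_one, one_pow]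
    have hσy : (ζ - 1) * (σ • y) = ζ ^ k * θ - θ ^ 5 := by
      have := congrArg (σ • ·) hy
      simp only [smul_sub, smul_mul', smul_pow', smul_one, hσζ, hk] at this
      rw [← this, mul_pow, h5, one_mul]
    have hdiff : σ • y - y = u * θ := by
      refine mul_left_cancel₀ hne ?_
      rw [mul_sub, hσy, ← hy, ← mul_assoc, hu]
      ring
    have hmem : σ • y - y ∈ Q := hσ y
    rw [hdiff] at hmem
    exact hQ.ne_top (Ideal.eq_top_of_isUnit_mem _ hmem (u.isUnit.mul hθ))
  intro σ hσ
  have h2 := key (σ ^ 2) (pow_mem hσ 2) (hsq σ)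
  rw [map_pow] at h2
  rw [MonoidHom.mem_ker]
  have h5 : π σ ^ 5 = 1 := by
    have : π σ ^ Nat.card (Multiplicative (ZMod 5)) = 1 := pow_card_eq_one'
    simpa using this
  calc π σ = π σ ^ 5 * ((π σ ^ 2) ^ 2)⁻¹ := by group
    _ = 1 := by rw [h5, h2]; simp

end NumberField

/-- An integral element criterion: if `η = θ ^ 5` satisfies `(ζ - 1) ^ 5 ∣ η ^ 5 - η` then
`ζ - 1 ∣ θ - η`. -/
theorem IsPrimitiveRoot.sub_one_dvd_sub_pow {R : Type*} [CommRing R] [IsDomain R]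
    [IsIntegrallyClosed R] {ζ θ w : R} (hζ : IsPrimitiveRoot ζ 5) (hw : (ζ - 1) ^ 4 * w = 5)
    (h : (ζ - 1) ^ 5 ∣ (θ ^ 5) ^ 5 - θ ^ 5) : ζ - 1 ∣ θ - θ ^ 5 := by
  obtain ⟨c, hc⟩ := h
  set l := ζ - 1 with hl
  set η := θ ^ 5 with hη
  have hne : l ≠ 0 := sub_ne_zero.2 (hζ.ne_one (by norm_num))
  have hlK : algebraMap R (FractionRing R) l ≠ 0 := by simpa using hne
  let P : Polynomial R := Polynomial.X ^ 5 + (Polynomial.C (l ^ 3 * w * η) * Polynomial.X ^ 4 +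
    Polynomial.C (2 * l ^ 2 * w * η ^ 2) * Polynomial.X ^ 3 +
    Polynomial.C (2 * l * w * η ^ 3) * Polynomial.X ^ 2 +
    Polynomial.C (w * η ^ 4) * Polynomial.X + Polynomial.C c)
  obtain ⟨Y, hY⟩ : ∃ Y, algebraMap R (FractionRing R) (θ - η) =
      algebraMap R (FractionRing R) l * Y := ⟨_, (mul_div_cancel₀ _ hlK).symm⟩
  have hint : IsIntegral R Y := by
    refine ⟨P, Polynomial.monic_X_pow_add (by compute_degree!), ?_⟩
    simp only [P, Polynomial.eval₂_add, Polynomial.eval₂_mul, Polynomial.eval₂_pow,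
      Polynomial.eval₂_X, Polynomial.eval₂_C]
    have hwK := congrArg (algebraMap R (FractionRing R)) hw
    have hcK := congrArg (algebraMap R (FractionRing R)) hc
    have hηK := congrArg (algebraMap R (FractionRing R)) hη
    simp only [map_sub, map_mul, map_pow, map_ofNat] at hwK hcK hηK hY ⊢
    generalize algebraMap R (FractionRing R) l = l at *
    generalize algebraMap R (FractionRing R) w = w at *
    generalize algebraMap R (FractionRing R) η = η at *
    generalize algebraMap R (FractionRing R) θ = θ at *
    generalize algebraMap R (FractionRing R) c = c at *
    have hθ : θ = η + l * Y := by linear_combination hY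
    refine (mul_eq_zero_iff_left (pow_ne_zero 5 hlK)).1 ?_
    rw [hθ] at hηK
    linear_combination (η * (l * Y) ^ 4 + 2 * η ^ 2 * (l * Y) ^ 3 + 2 * η ^ 3 * (l * Y) ^ 2 +
      η ^ 4 * (l * Y)) * hwK - hcK - hηK
  obtain ⟨y, rfl⟩ := IsIntegrallyClosed.isIntegral_iff.1 hint
  exact ⟨y, FaithfulSMul.algebraMap_injective R (FractionRing R) (by rw [hY, map_mul])⟩

section CyclotomicRing

variable {R : Type*} [CommRing R] [IsDomain R] {ζ r η θ S : R} {T : ℤ}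

theorem IsPrimitiveRoot.one_add_pow_five_eq_zero (hζ : IsPrimitiveRoot ζ 5) :
    1 + ζ + ζ ^ 2 + ζ ^ 3 + ζ ^ 4 = 0 := by
  have := hζ.geom_sum_eq_zero (by norm_num)
  simpa [Finset.sum_range_succ] using this

theorem IsPrimitiveRoot.sub_one_pow_four_mul (hζ : IsPrimitiveRoot ζ 5) :
    (ζ - 1) ^ 4 * (ζ ^ 3 - ζ - 1) = 5 := by
  linear_combination (ζ ^ 3 - 5 * ζ ^ 2 + 9 * ζ - 6) * hζ.one_add_pow_five_eq_zero

theorem IsPrimitiveRoot.one_add_two_mul_sq (hζ : IsPrimitiveRoot ζ 5) :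
    (1 + 2 * (ζ + ζ ^ 4)) ^ 2 = 5 := by
  linear_combination (4 * ζ ^ 4 - 4 * ζ ^ 3 + 8 * ζ - 4) * hζ.one_add_pow_five_eq_zero

theorem sub_one_pow_five_dvd_of_dvd_trace (hζ : IsPrimitiveRoot ζ 5) (hT : 25 ∣ T)
    (hη : η ^ 2 - T * η + 1 = 0) : (ζ - 1) ^ 5 ∣ η ^ 5 - η := by
  obtain ⟨k, rfl⟩ := hT
  refine ⟨(ζ - 1) ^ 3 * (ζ ^ 3 - ζ - 1) ^ 2 * (η ^ 2 - 1) * k * η ^ 2, ?_⟩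
  push_cast at hη
  linear_combination η * (η ^ 2 - 1) * hη - k * η ^ 2 * (η ^ 2 - 1) *
    ((ζ - 1) ^ 4 * (ζ ^ 3 - ζ - 1) + 5) * hζ.sub_one_pow_four_mul

theorem sub_one_pow_five_dvd_of_trace_eq [IsIntegrallyClosed R] (hζ : IsPrimitiveRoot ζ 5)
    {s k : ℤ} (hs : s ^ 2 = 1) (hT : T = 2 * s + 125 * k)
    (hη : η ^ 2 - T * η + 1 = 0) : (ζ - 1) ^ 5 ∣ η ^ 5 - η := by
  have hs' : (s : R) ^ 2 = 1 := by exact_mod_cast congrArg (Int.cast : ℤ → R) hs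
  have h1 : ((ζ - 1) ^ 6) ^ 2 ∣ (η - s) ^ 2 := by
    refine ⟨(ζ ^ 3 - ζ - 1) ^ 3 * k * η, ?_⟩
    subst hT
    push_cast at hη
    set W := (ζ - 1) ^ 4 * (ζ ^ 3 - ζ - 1) with hW
    have hW5 : W = 5 := hζ.sub_one_pow_four_mul
    have : ((ζ - 1) ^ 6) ^ 2 * ((ζ ^ 3 - ζ - 1) ^ 3 * k * η) = W ^ 3 * k * η := by
      rw [hW]; ring
    rw [this, hW5]
    linear_combination hη + hs'
  have h2 : (ζ - 1) ^ 6 ∣ η - s := (IsIntegrallyClosed.pow_dvd_pow_iff two_ne_zero).1 h1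
  have h3 : η - s ∣ η ^ 5 - η :=
    ⟨η * (η + s) * (η ^ 2 + 1), by linear_combination η * (η ^ 2 + 1) * hs'⟩
  exact (pow_dvd_pow _ (by norm_num)).trans (h2.trans h3)

variable [CharZero R]

theorem mul_trace_sub_eq_one (hη : 2 * η = T + S * r) (hTS : (T : R) ^ 2 - S ^ 2 * r ^ 2 = 4) :
    η * (T - η) = 1 := by
  refine mul_left_cancel₀ (by norm_num : (4 : R) ≠ 0) ?_
  linear_combination hTS + (2 * T - 2 * η - (T + S * r)) * hη

variable (f : R →+* R)

theorem IsPrimitiveRoot.map_eq_or_of_map_mul_eq (hζ : IsPrimitiveRoot ζ 5) (hf : Function.Injective f)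
    (hr : r ≠ 0) (hr2 : f (r ^ 2) = r ^ 2) (h : f ((ζ - ζ ^ 4) * r) = (ζ - ζ ^ 4) * r) :
    (f ζ = ζ ∧ f r = r) ∨ (f ζ = ζ ^ 4 ∧ f r = -r) := by
  have h5 : ζ ^ 5 = 1 := hζ.pow_eq_one
  have hpr : IsPrimitiveRoot (f ζ) 5 := hζ.map_of_injective hf
  obtain ⟨i, hi, hiζ⟩ := hζ.eq_pow_of_pow_eq_one hpr.pow_eq_one
  have hfr : f r = r ∨ f r = -r := by
    rw [map_pow] at hr2
    exact sq_eq_sq_iff_eq_or_eq_neg.1 hr2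
  have hne : ∀ j, 0 < j → j < 5 → ζ ^ j - 1 ≠ 0 := fun j h0 h1 =>
    sub_ne_zero.2 (hζ.pow_ne_one_of_pos_of_lt h0.ne' h1)
  have h0 : ζ ≠ 0 := hζ.ne_zero (by norm_num)
  have hA : ζ - ζ ^ 4 ≠ 0 := fun h => mul_ne_zero h0 (hne 3 (by norm_num) (by norm_num))
    (by linear_combination -h)
  have hAB : ζ ^ 2 + ζ ^ 3 ≠ ζ + ζ ^ 4 := fun h =>
    mul_ne_zero (mul_ne_zero h0 (hne 1 (by norm_num) (by norm_num)))
      (hne 2 (by norm_num) (by norm_num)) (by linear_combination -h)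
  rw [map_mul, map_sub, map_pow, ← hiζ] at h
  have hmain : ∀ e : R, f r = e * r → (ζ ^ i - (ζ ^ i) ^ 4) * e = ζ - ζ ^ 4 := fun e he => by
    rw [he, mul_comm e, ← mul_assoc, mul_right_comm] at h
    exact mul_right_cancel₀ hr h
  have hsq : (ζ ^ i - (ζ ^ i) ^ 4) ^ 2 = (ζ - ζ ^ 4) ^ 2 := by
    rcases hfr with h | h
    · rw [← hmain 1 (by rw [h, one_mul]), mul_one]
    · rw [← hmain (-1) (by rw [h, neg_one_mul]), mul_neg_one, neg_sq]
  rw [← hiζ]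
  interval_cases i
  · refine absurd (pow_eq_zero_iff (two_ne_zero)).1 fun h => hA (h (hsq.symm.trans (by ring)))
  · refine Or.inl ⟨pow_one ζ, hfr.resolve_right fun h => hA ?_⟩
    have := hmain (-1) (by rw [h, neg_one_mul])
    exact (mul_eq_zero_iff_left (two_ne_zero (α := R))).1 (by linear_combination -this)
  · exact absurd (by linear_combination -hsq + (ζ ^ 11 + ζ ^ 6 + ζ - ζ ^ 3 - 2 * ζ ^ 5) * h5) hAB
  · exact absurd (by linear_combination -hsq + (ζ - ζ ^ 3 +
      ζ ^ 4 * (ζ ^ 15 + ζ ^ 10 + ζ ^ 5 + 1) - 2 * ζ ^ 5 * (ζ ^ 5 + 1)) * h5) hAB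
  · refine Or.inr ⟨rfl, hfr.resolve_left fun h => hA ?_⟩
    have := hmain 1 (by rw [h, one_mul])
    refine (mul_eq_zero_iff_left (two_ne_zero (α := R))).1 ?_
    linear_combination -this - (ζ ^ 11 + ζ ^ 6 + ζ) * h5

theorem exists_map_eq_pow_mul (hζ : IsPrimitiveRoot ζ 5) (hη : 2 * θ ^ 5 = T + S * r)
    (hTS : (T : R) ^ 2 - S ^ 2 * r ^ 2 = 4) (hS : f S = S) (hr : f r = r) :
    ∃ k : ℕ, f θ = ζ ^ k * θ := by
  have hfθ : f θ ^ 5 = θ ^ 5 := by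
    have h2 := congrArg f hη
    simp only [map_mul, map_add, map_pow, map_ofNat, map_intCast, hS, hr] at h2
    exact mul_left_cancel₀ two_ne_zero (h2.trans hη.symm)
  have hu := mul_trace_sub_eq_one hη hTS
  obtain ⟨k, -, hk⟩ := hζ.eq_pow_of_pow_eq_one (ξ := f θ * (θ ^ 4 * (T - θ ^ 5))) (by
    rw [mul_pow, hfθ]
    calc θ ^ 5 * (θ ^ 4 * (T - θ ^ 5)) ^ 5 = (θ ^ 5 * (T - θ ^ 5)) ^ 5 := by ring
      _ = 1 := by rw [hu, one_pow])
  exact ⟨k, by rw [hk]; linear_combination -f θ * hu⟩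

theorem exists_map_mul_eq_pow (hζ : IsPrimitiveRoot ζ 5) (hη : 2 * θ ^ 5 = T + S * r)
    (hTS : (T : R) ^ 2 - S ^ 2 * r ^ 2 = 4) (hS : f S = S) (hr : f r = -r) :
    ∃ k : ℕ, f θ * θ = ζ ^ k := by
  have h1 : (f θ * θ) ^ 5 = 1 := by
    have h2 := congrArg f hη
    simp only [map_mul, map_add, map_pow, map_ofNat, map_intCast, hS, hr] at h2
    refine mul_left_cancel₀ (by norm_num : (4 : R) ≠ 0) ?_
    linear_combination (2 * θ ^ 5) * h2 + (T - S * r) * hη + hTS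
  obtain ⟨k, -, hk⟩ := hζ.eq_pow_of_pow_eq_one h1
  exact ⟨k, hk.symm⟩

end CyclotomicRing

section ResidueField

variable {F : Type*} [Field F] {p : ℕ} [Fact p.Prime] [Algebra (ZMod p) F] {T : ℤ} {e : ZMod p}

theorem eq_algebraMap_or_of_trace_eq {X : F} (he : e ^ 2 - T * e + 1 = 0)
    (hX : X ^ 2 - T * X + 1 = 0) :
    X = algebraMap (ZMod p) F e ∨ X = algebraMap (ZMod p) F (T - e) := by
  have h := congrArg (algebraMap (ZMod p) F) he
  simp only [map_add, map_sub, map_mul, map_pow, map_one, map_zero, map_intCast] at h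
  have : (X - algebraMap (ZMod p) F e) * (X - algebraMap (ZMod p) F (T - e)) = 0 := by
    rw [map_sub, map_intCast]
    linear_combination hX - h
  simpa [sub_eq_zero] using this

theorem natCast_sq_eq_of_pow_mul_eq {X z : F} {c : ZMod p} {n i k : ℕ} (hz : IsPrimitiveRoot z 5)
    (h5 : 5 ∣ p - 1) (he : e ^ 2 - T * e + 1 = 0) (hX : (X ^ 5) ^ 2 - T * X ^ 5 + 1 = 0)
    (hec : e ^ ((p - 1) / 5) = c ^ n) (hi : z ^ i = algebraMap (ZMod p) F c)
    (hk : z ^ k * X = X ^ p) : (k : ZMod 5) ^ 2 = (i * n) ^ 2 := by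
  have hp1 : 1 ≤ p := (Fact.out : p.Prime).one_le
  have hX0 : X ≠ 0 := by
    rintro rfl
    simp at hX
  have hzk : z ^ k = (X ^ 5) ^ ((p - 1) / 5) := by
    refine mul_right_cancel₀ hX0 ?_
    rw [hk, ← pow_mul, Nat.mul_div_cancel' h5, ← pow_succ, Nat.sub_add_cancel hp1]
  have key : ∀ a b : ℕ, z ^ a = z ^ b → (a : ZMod 5) = b := fun a b h => by
    have := (hz.zpow_eq_zpow_iff_zmod (by norm_num) a b).1 (by simpa using h)
    simpa using this
  have hzin : z ^ (i * n) = algebraMap (ZMod p) F (e ^ ((p - 1) / 5)) := by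
    rw [pow_mul, hi, hec, map_pow]
  rcases eq_algebraMap_or_of_trace_eq he hX with h | h
  · have := key k (i * n) (by rw [hzk, h, hzin, map_pow])
    rw [this, Nat.cast_mul]
  · have hinv : (T - e) * e = 1 := by linear_combination -he
    have := key (k + i * n) 0 (by
      rw [pow_add, hzk, h, hzin, ← map_pow, ← map_mul, ← mul_pow, hinv, one_pow, map_one, pow_zero])
    push_cast at this
    linear_combination (k - i * n : ZMod 5) * this

end ResidueField

namespace NumberField

variable {N : Type} [Field N] [NumberField N] [IsGalois ℚ N]

theorem exists_frobenius_of_hasKummerWitness {ζ r θ θ' : 𝓞 N} {t t' : ℤ} {n n' : ℕ}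
    (hζ : IsPrimitiveRoot ζ 5) (hr2 : ∃ d : ℤ, r ^ 2 = d)
    (h : 2 * θ ^ 5 = t + r) (hη : (θ ^ 5) ^ 2 - t * θ ^ 5 + 1 = 0)
    (hη' : (θ' ^ 5) ^ 2 - t' * θ' ^ 5 + 1 = 0) (hW : HasKummerWitness t t' n n') :
    ∃ φ : Gal(N/ℚ), φ • ζ = ζ ∧ φ • r = r ∧ ∃ i : ZMod 5, i ≠ 0 ∧
      (∀ k : ℕ, φ • θ = ζ ^ k * θ → (k : ZMod 5) ^ 2 = (i * n) ^ 2) ∧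
      ∀ k : ℕ, φ • θ' = ζ ^ k * θ' → (k : ZMod 5) ^ 2 = (i * n') ^ 2 := by
  obtain ⟨p, hp, hp5, e, e', c, hc5, hc1, he, he2, he', hen, hen'⟩ := hW
  have : Fact p.Prime := ⟨hp⟩
  have hp0 : (p : ℤ) ≠ 0 := by exact_mod_cast hp.ne_zero
  have hpm : (Ideal.span {(p : ℤ)}).IsMaximal :=
    PrincipalIdealRing.isMaximal_of_irreducible (Nat.prime_iff_prime_int.1 hp).irreducible
  have hpbot : Ideal.span {(p : ℤ)} ≠ ⊥ := by simpa using hp.ne_zero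
  obtain ⟨Q, hQ, hQp⟩ := Ideal.exists_maximal_ideal_liesOver_of_isIntegral (S := 𝓞 N)
    (Ideal.span {(p : ℤ)})
  have hQ0 : Q ≠ ⊥ := Ideal.ne_bot_of_liesOver_of_ne_bot hpbot Q
  have : Finite (𝓞 N ⧸ Q) := Ideal.finiteQuotientOfFreeOfNeBot _ hQ0
  obtain ⟨φ, hφ⟩ := IsArithFrobAt.exists_of_isInvariant ℤ Gal(N/ℚ) Q
  have hcard : Nat.card (ℤ ⧸ Q.under ℤ) = p := by
    rw [← hQp.over, Nat.card_congr (Int.quotientSpanNatEquivZMod p).toEquiv, Nat.card_zmod]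
  let : Field (𝓞 N ⧸ Q) := Ideal.Quotient.field Q
  set ψ := Ideal.Quotient.mk Q with hψ
  have hφψ : ∀ x, ψ (φ • x) = ψ x ^ p := fun x => by
    rw [← hcard]
    exact AlgHom.IsArithFrobAt.mk_apply hφ x
  have hpF : (p : 𝓞 N ⧸ Q) = 0 := by
    have : (p : 𝓞 N) ∈ Q := by
      have h1 : (p : ℤ) ∈ Q.under ℤ := by
        rw [← hQp.over]
        exact Ideal.mem_span_singleton_self _
      simpa [Ideal.under] using h1
    simpa using Ideal.Quotient.eq_zero_iff_mem.2 this
  have : CharP (𝓞 N ⧸ Q) p := (CharP.charP_iff_prime_eq_zero hp).2 hpF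
  let : Algebra (ZMod p) (𝓞 N ⧸ Q) := ZMod.algebra _ p
  have hp6 : 6 ≤ p := by
    have := hp.two_le
    obtain ⟨m, hm⟩ := hp5
    omega
  have h5F : (5 : 𝓞 N ⧸ Q) ≠ 0 := fun h => by
    have := (CharP.cast_eq_zero_iff (𝓞 N ⧸ Q) p 5).1 (by exact_mod_cast h)
    exact absurd (Nat.le_of_dvd (by norm_num) this) (by omega)
  have h2F : (2 : 𝓞 N ⧸ Q) ≠ 0 := fun h => by
    have := (CharP.cast_eq_zero_iff (𝓞 N ⧸ Q) p 2).1 (by exact_mod_cast h)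
    exact absurd (Nat.le_of_dvd (by norm_num) this) (by omega)
  have hz : IsPrimitiveRoot (ψ ζ) 5 := by
    have : Fact (Nat.Prime 5) := ⟨by norm_num⟩
    refine IsPrimitiveRoot.iff_orderOf.2 (orderOf_eq_prime ?_ fun h1 => h5F ?_)
    · rw [← map_pow, hζ.pow_eq_one, map_one]
    · have h4 := congrArg ψ hζ.sub_one_pow_four_mul
      rw [map_mul, map_pow, map_sub, h1, map_one, sub_self, map_ofNat] at h4
      rw [← h4]
      ring
  have hφζ : φ • ζ = ζ := by
    have h1 : φ • ζ = ζ ^ p := by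
      rw [← hcard]
      refine AlgHom.IsArithFrobAt.apply_of_pow_eq_one hφ hζ.pow_eq_one fun h5 => h5F ?_
      exact (map_ofNat ψ 5).symm.trans (Ideal.Quotient.eq_zero_iff_mem.2 (by exact_mod_cast h5))
    obtain ⟨m, hm⟩ := hp5
    rw [h1, show p = 5 * m + 1 by omega, pow_succ, pow_mul, hζ.pow_eq_one, one_pow, one_mul]
  obtain ⟨g, hg, hgt⟩ : ∃ g : ZMod p, ψ θ ^ 5 = algebraMap (ZMod p) (𝓞 N ⧸ Q) g ∧ 2 * g ≠ t := by
    have hX : (ψ θ ^ 5) ^ 2 - t * ψ θ ^ 5 + 1 = 0 := by simpa using congrArg ψ hη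
    rcases eq_algebraMap_or_of_trace_eq he hX with h1 | h1
    · exact ⟨e, h1, he2⟩
    · exact ⟨_, h1, fun h2 => he2 (by linear_combination -h2)⟩
  have hψr : ψ r = algebraMap (ZMod p) (𝓞 N ⧸ Q) (2 * g - t) := by
    have h1 := congrArg ψ h
    simp only [map_mul, map_add, map_pow, map_ofNat, map_intCast, hg] at h1
    simp only [map_mul, map_sub, map_ofNat, map_intCast]
    linear_combination -h1
  have hφr : φ • r = r := by
    obtain ⟨d, hd⟩ := hr2
    have h1 : (φ • r) ^ 2 = r ^ 2 := by
      rw [← smul_pow', hd]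
      exact map_intCast (MulSemiringAction.toRingHom Gal(N/ℚ) (𝓞 N) φ) d
    refine (sq_eq_sq_iff_eq_or_eq_neg.1 h1).resolve_right fun h2 => ?_
    have h3 := hφψ r
    rw [h2, map_neg, hψr, ← map_pow, ZMod.pow_card, neg_eq_iff_add_eq_zero, ← two_mul] at h3
    have h4 := (mul_eq_zero.1 h3).resolve_left h2F
    rw [map_eq_zero, sub_eq_zero] at h4
    exact hgt h4
  obtain ⟨i, -, hi⟩ := hz.eq_pow_of_pow_eq_one
    (show algebraMap (ZMod p) (𝓞 N ⧸ Q) c ^ 5 = 1 by rw [← map_pow, hc5, map_one])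
  have hk : ∀ {x : 𝓞 N} {k : ℕ}, φ • x = ζ ^ k * x → ψ ζ ^ k * ψ x = ψ x ^ p := fun hx => by
    rw [← hφψ, hx, map_mul, map_pow]
  refine ⟨φ, hφζ, hφr, i, fun h0 => hc1 ?_, fun k h1 => ?_, fun k h1 => ?_⟩
  · obtain ⟨m, rfl⟩ := (ZMod.natCast_eq_zero_iff i 5).1 h0
    rw [pow_mul, hz.pow_eq_one, one_pow] at hi
    exact (algebraMap (ZMod p) (𝓞 N ⧸ Q)).injective (by rw [← hi, map_one])
  · exact natCast_sq_eq_of_pow_mul_eq hz hp5 he (by simpa using congrArg ψ hη) hen hi (hk h1)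
  · exact natCast_sq_eq_of_pow_mul_eq hz hp5 he' (by simpa using congrArg ψ hη') hen' hi (hk h1)

end NumberField

theorem MonoidHom.surjective_of_det_ne_zero {G : Type*} [Group G] {p : ℕ} [Fact p.Prime]
    (π : G →* Multiplicative (ZMod p × ZMod p)) {a b : G} {x y x' y' : ZMod p}
    (ha : π a = Multiplicative.ofAdd (x, y)) (hb : π b = Multiplicative.ofAdd (x', y'))
    (h : x * y' - x' * y ≠ 0) : Function.Surjective π := by
  intro w
  set z := w.toAdd with hz
  set m := (z.1 * y' - z.2 * x') / (x * y' - x' * y) with hm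
  set n := (x * z.2 - y * z.1) / (x * y' - x' * y) with hn
  refine ⟨a ^ m.val * b ^ n.val, ?_⟩
  rw [map_mul, map_pow, map_pow, ha, hb, ← ofAdd_nsmul, ← ofAdd_nsmul, ← ofAdd_add,
    ← ofAdd_toAdd w, ← hz, Prod.smul_mk, Prod.smul_mk, Prod.mk_add_mk]
  simp only [nsmul_eq_mul, ZMod.natCast_zmod_val]
  congr 1
  ext
  · simp only [hm, hn, div_eq_mul_inv]
    linear_combination z.1 * mul_inv_cancel₀ h
  · simp only [hm, hn, div_eq_mul_inv]
    linear_combination z.2 * mul_inv_cancel₀ h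

theorem IsPrimitiveRoot.pow_four_pow_four {R : Type*} [CommRing R] {ζ : R}
    (hζ : IsPrimitiveRoot ζ 5) : (ζ ^ 4) ^ 4 = ζ := by
  linear_combination (ζ ^ 11 + ζ ^ 6 + ζ) * hζ.pow_eq_one

namespace NumberField

variable {M N : Type} [Field M] [NumberField M] [Field N] [NumberField N] [Algebra M N]

theorem exists_kummerHom_inertia_le_ker {ζ r θ S : 𝓞 N} {T : ℤ} (hζ : IsPrimitiveRoot ζ 5)
    (hσ : ∀ σ : Gal(N/M), (σ • ζ = ζ ∧ σ • r = r) ∨ (σ • ζ = ζ ^ 4 ∧ σ • r = -r))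
    (hS : ∀ σ : Gal(N/M), σ • S = S) (hη : 2 * θ ^ 5 = T + S * r)
    (hTS : (T : 𝓞 N) ^ 2 - S ^ 2 * r ^ 2 = 4) (hdvd : (ζ - 1) ^ 5 ∣ (θ ^ 5) ^ 5 - θ ^ 5) :
    ∃ π : Gal(N/M) →* Multiplicative (ZMod 5),
      (∀ (σ : Gal(N/M)) (k : ℕ), σ • ζ = ζ → σ • θ = ζ ^ k * θ →
        π σ = Multiplicative.ofAdd (k : ZMod 5)) ∧
      (∀ σ : Gal(N/M), σ • ζ = ζ → ∃ k : ℕ, σ • θ = ζ ^ k * θ) ∧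
      ∀ Q : Ideal (𝓞 N), Q.IsPrime → Q.inertia Gal(N/M) ≤ π.ker := by
  have hθ : IsUnit θ := by
    have := mul_trace_sub_eq_one hη hTS
    exact isUnit_of_dvd_one ⟨θ ^ 4 * (T - θ ^ 5), by rw [← this]; ring⟩
  have hζ4 : ζ ^ 4 ≠ ζ := fun h => by
    have := hζ.pow_inj (by norm_num) (by norm_num) (h.trans (pow_one ζ).symm)
    norm_num at this
  have hex : ∀ σ : Gal(N/M), σ • ζ = ζ → ∃ k : ℕ, σ • θ = ζ ^ k * θ := fun σ h => by
    have hr : σ • r = r := ((hσ σ).resolve_right fun h' => hζ4 (h'.1.symm.trans h)).2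
    exact exists_map_eq_pow_mul (MulSemiringAction.toRingHom Gal(N/M) (𝓞 N) σ) hζ hη hTS (hS σ) hr
  have hinj : Function.Injective (algebraMap (𝓞 N) N) := FaithfulSMul.algebraMap_injective _ _
  have hζN : IsPrimitiveRoot (algebraMap (𝓞 N) N ζ) 5 := hζ.map_of_injective hinj
  obtain ⟨π, hπ⟩ := exists_kummerHom (M := M) (θ := algebraMap (𝓞 N) N θ) hζN
    (by simpa using hθ.ne_zero) (fun σ => by
      rcases hσ σ with ⟨h1, h2⟩ | ⟨h1, h2⟩
      · refine Or.inl ⟨congrArg (algebraMap (𝓞 N) N) h1, ?_⟩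
        obtain ⟨k, hk⟩ := hex σ h1
        exact ⟨k, (congrArg (algebraMap (𝓞 N) N) hk).trans (by simp)⟩
      · refine Or.inr ⟨?_, ?_⟩
        · refine (congrArg (algebraMap (𝓞 N) N) h1).trans (eq_inv_of_mul_eq_one_left ?_)
          rw [map_pow, ← pow_succ, hζN.pow_eq_one]
        · obtain ⟨k, hk⟩ := exists_map_mul_eq_pow
            (MulSemiringAction.toRingHom Gal(N/M) (𝓞 N) σ) hζ hη hTS (hS σ) h2
          exact ⟨k, (map_mul (algebraMap (𝓞 N) N) _ _).symm.trans
            ((congrArg (algebraMap (𝓞 N) N) hk).trans (map_pow _ _ _))⟩)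
  have hπ' : ∀ (σ : Gal(N/M)) (k : ℕ), σ • ζ = ζ → σ • θ = ζ ^ k * θ →
      π σ = Multiplicative.ofAdd (k : ZMod 5) := fun σ k h1 h2 =>
    hπ σ k (congrArg (algebraMap (𝓞 N) N) h1) ((congrArg (algebraMap (𝓞 N) N) h2).trans (by simp))
  refine ⟨π, hπ', hex, fun Q hQ => kummerHom_eq_one_of_mem_inertia hζ hθ π (fun σ h => ?_)
    (fun σ => ?_) (hζ.sub_one_dvd_sub_pow hζ.sub_one_pow_four_mul hdvd) Q hQ⟩
  · obtain ⟨k, hk⟩ := hex σ h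
    exact ⟨k, hk, hπ' σ k h hk⟩
  · rw [pow_two, mul_smul]
    rcases hσ σ with ⟨h1, -⟩ | ⟨h1, -⟩
    · rw [h1, h1]
    · rw [h1, smul_pow', h1, hζ.pow_four_pow_four]

theorem exists_injective_classGroup_of_hasKummerWitness [IsGalois ℚ N] [IsTotallyComplex M]
    (htors : ∀ u : (𝓞 M)ˣ, u ^ 5 = 1 → u = 1) {ζ r θ θ' : 𝓞 N} {d t t' s k : ℤ}
    (hζ : IsPrimitiveRoot ζ 5) (hr : r ^ 2 = d) (hd : d ≠ 0) (ht : t ^ 2 - 4 = d)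
    (ht' : t' ^ 2 - 4 = 125 * d) (hθ : 2 * θ ^ 5 = t + r)
    (hθ' : 2 * θ' ^ 5 = t' + 5 * (1 + 2 * (ζ + ζ ^ 4)) * r)
    (hx : ∀ σ : Gal(N/M), σ • ((ζ - ζ ^ 4) * r) = (ζ - ζ ^ 4) * r)
    (hgen : ∀ φ : Gal(N/ℚ), φ • ((ζ - ζ ^ 4) * r) = (ζ - ζ ^ 4) * r →
      ∀ m : M, φ (algebraMap M N m) = algebraMap M N m)
    (h25 : 25 ∣ t) (hs : s ^ 2 = 1) (hk : t' = 2 * s + 125 * k) {n₁ n₁' n₂ n₂' : ℕ}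
    (hW₁ : HasKummerWitness t t' n₁ n₁') (hW₂ : HasKummerWitness t t' n₂ n₂')
    (hn : ((n₁ : ZMod 5) * n₂') ^ 2 ≠ (n₂ * n₁') ^ 2) :
    ∃ f : Multiplicative (ZMod 5 × ZMod 5) →* ClassGroup (𝓞 M), Function.Injective f := by
  have : IsGalois M N := IsGalois.tower_top_of_isGalois ℚ M N
  have hr0 : r ≠ 0 := by
    rintro rfl
    refine hd ?_
    have : ((d : ℤ) : 𝓞 N) = 0 := by rw [← hr]; ring
    exact_mod_cast this
  have hσ : ∀ σ : Gal(N/M), (σ • ζ = ζ ∧ σ • r = r) ∨ (σ • ζ = ζ ^ 4 ∧ σ • r = -r) := fun σ =>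
    hζ.map_eq_or_of_map_mul_eq (MulSemiringAction.toRingHom Gal(N/M) (𝓞 N) σ)
      (MulAction.injective σ) hr0 (by rw [hr, map_intCast]) (hx σ)
  have hT : (t : 𝓞 N) ^ 2 - 1 ^ 2 * r ^ 2 = 4 := by
    have : (t : 𝓞 N) ^ 2 - 4 = d := by exact_mod_cast ht
    rw [hr]
    linear_combination this
  have hT' : (t' : 𝓞 N) ^ 2 - (5 * (1 + 2 * (ζ + ζ ^ 4))) ^ 2 * r ^ 2 = 4 := by
    have : (t' : 𝓞 N) ^ 2 - 4 = 125 * d := by exact_mod_cast ht'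
    rw [mul_pow, hζ.one_add_two_mul_sq, hr]
    linear_combination this
  have hθ1 : 2 * θ ^ 5 = t + 1 * r := by rw [hθ, one_mul]
  have hη : (θ ^ 5) ^ 2 - t * θ ^ 5 + 1 = 0 := by
    linear_combination -mul_trace_sub_eq_one hθ1 hT
  have hη' : (θ' ^ 5) ^ 2 - t' * θ' ^ 5 + 1 = 0 := by
    linear_combination -mul_trace_sub_eq_one hθ' hT'
  obtain ⟨π₁, h₁, hex₁, hI₁⟩ := exists_kummerHom_inertia_le_ker hζ hσ (fun σ => smul_one σ) hθ1 hT
    (sub_one_pow_five_dvd_of_dvd_trace hζ h25 hη)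
  obtain ⟨π₂, h₂, hex₂, hI₂⟩ := exists_kummerHom_inertia_le_ker hζ hσ (fun σ => by
      have h : σ • (ζ + ζ ^ 4) = ζ + ζ ^ 4 := by
        rcases hσ σ with ⟨h, -⟩ | ⟨h, -⟩
        · rw [smul_add, smul_pow', h]
        · rw [smul_add, smul_pow', h, hζ.pow_four_pow_four, add_comm]
      have h' := map_ofNat (MulSemiringAction.toRingHom Gal(N/M) (𝓞 N) σ)
      rw [smul_mul', smul_add, smul_mul', h, smul_one, show σ • (5 : 𝓞 N) = 5 from h' 5,
        show σ • (2 : 𝓞 N) = 2 from h' 2]) hθ' hT'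
    (sub_one_pow_five_dvd_of_trace_eq hζ hs hk hη')
  let π : Gal(N/M) →* Multiplicative (ZMod 5 × ZMod 5) :=
    { toFun := fun σ => Multiplicative.ofAdd ((π₁ σ).toAdd, (π₂ σ).toAdd)
      map_one' := by simp
      map_mul' := fun σ τ => by simp; rfl }
  have hlift : ∀ {n n' : ℕ}, HasKummerWitness t t' n n' → ∃ (σ : Gal(N/M)) (i x y : ZMod 5),
      i ≠ 0 ∧ π σ = Multiplicative.ofAdd (x, y) ∧ x ^ 2 = (i * n) ^ 2 ∧ y ^ 2 = (i * n') ^ 2 := by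
    intro n n' hW
    obtain ⟨φ, hφζ, hφr, i, hi, hk, hk'⟩ :=
      exists_frobenius_of_hasKummerWitness hζ ⟨d, hr⟩ hθ hη hη' hW
    have hφx : φ • ((ζ - ζ ^ 4) * r) = (ζ - ζ ^ 4) * r := by
      rw [smul_mul', smul_sub, smul_pow', hφζ, hφr]
    let σ : Gal(N/M) := AlgEquiv.ofRingEquiv (f := φ.toRingEquiv) (hgen φ hφx)
    obtain ⟨x, hx⟩ := hex₁ σ hφζ
    obtain ⟨y, hy⟩ := hex₂ σ hφζ
    refine ⟨σ, i, x, y, hi, ?_, hk x hx, hk' y hy⟩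
    change Multiplicative.ofAdd ((π₁ σ).toAdd, (π₂ σ).toAdd) = _
    rw [h₁ σ x hφζ hx, h₂ σ y hφζ hy]
    rfl
  obtain ⟨σ, i, x, y, hi, hπσ, hx1, hy1⟩ := hlift hW₁
  obtain ⟨τ, j, x', y', hj, hπτ, hx2, hy2⟩ := hlift hW₂
  have : Fact (Nat.Prime 5) := ⟨by norm_num⟩
  refine exists_injective_classGroup_of_surjective htors π
    (π.surjective_of_det_ne_zero hπσ hπτ fun h0 => hn ?_) fun Q hQ _ σ hσQ => ?_
  · have h1 : (i * j) ^ 2 * (((n₁ : ZMod 5) * n₂') ^ 2 - (n₂ * n₁') ^ 2) = 0 := by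
      linear_combination (x * y' + x' * y) * h0 - y' ^ 2 * hx1 - (i * n₁) ^ 2 * hy2
        + y ^ 2 * hx2 + (j * n₂) ^ 2 * hy1
    exact sub_eq_zero.1 ((mul_eq_zero.1 h1).resolve_left (pow_ne_zero _ (mul_ne_zero hi hj)))
  · rw [MonoidHom.mem_ker]
    change Multiplicative.ofAdd ((π₁ σ).toAdd, (π₂ σ).toAdd) = 1
    rw [MonoidHom.mem_ker.1 (hI₁ Q hQ hσQ), MonoidHom.mem_ker.1 (hI₂ Q hQ hσQ)]
    rfl

end NumberField

section GaloisConjugates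

variable {N : Type*} [Field N] [CharZero N] [FiniteDimensional ℚ N] [IsGalois ℚ N] {ζ r : N}

theorem IsGalois.exists_map_eq_neg_of_not_isSquare {n : ℤ} (hn : ¬IsSquare n) {y : N}
    (hy : y ^ 2 = n) : ∃ φ : Gal(N/ℚ), φ y = -y := by
  by_contra! h
  have hfix : ∀ φ : Gal(N/ℚ), φ y = y := fun φ =>
    (sq_eq_sq_iff_eq_or_eq_neg.1 (by rw [← map_pow, hy, map_intCast])).resolve_right (h φ)
  obtain ⟨q, rfl⟩ := (IsGalois.mem_range_algebraMap_iff_fixed y).2 hfix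
  have hq : q ^ 2 = n := (algebraMap ℚ N).injective (by rw [map_pow, hy, map_intCast])
  exact hn (Rat.isSquare_intCast_iff.1 ⟨q, by rw [← hq, pow_two]⟩)

theorem IsPrimitiveRoot.map_eq_pow_of_five (hζ : IsPrimitiveRoot ζ 5) (φ : Gal(N/ℚ)) :
    (φ ζ = ζ ∨ φ ζ = ζ ^ 4) ∨ (φ ζ = ζ ^ 2 ∨ φ ζ = ζ ^ 3) := by
  have h1 := hζ.map_of_injective φ.injective
  obtain ⟨i, hi, hi'⟩ := hζ.eq_pow_of_pow_eq_one h1.pow_eq_one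
  interval_cases i
  · exact absurd (by rw [← hi', pow_zero]) (h1.ne_one (by norm_num))
  all_goals simp [← hi']

theorem IsPrimitiveRoot.map_one_add_two_mul_of_map (hζ : IsPrimitiveRoot ζ 5) {φ : Gal(N/ℚ)}
    (h : φ ζ = ζ ∨ φ ζ = ζ ^ 4) : φ (1 + 2 * (ζ + ζ ^ 4)) = 1 + 2 * (ζ + ζ ^ 4) := by
  simp only [map_add, map_mul, map_pow, map_one, map_ofNat]
  rcases h with h | h <;> rw [h]
  rw [hζ.pow_four_pow_four, add_comm (ζ ^ 4)]

theorem IsPrimitiveRoot.map_one_add_two_mul_of_map' (hζ : IsPrimitiveRoot ζ 5) {φ : Gal(N/ℚ)}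
    (h : φ ζ = ζ ^ 2 ∨ φ ζ = ζ ^ 3) : φ (1 + 2 * (ζ + ζ ^ 4)) = -(1 + 2 * (ζ + ζ ^ 4)) := by
  simp only [map_add, map_mul, map_pow, map_one, map_ofNat]
  rcases h with h | h <;> rw [h]
  · linear_combination 2 * hζ.one_add_pow_five_eq_zero + 2 * ζ ^ 3 * hζ.pow_eq_one
  · linear_combination 2 * hζ.one_add_pow_five_eq_zero + 2 * (ζ ^ 7 + ζ ^ 2) * hζ.pow_eq_one

theorem IsPrimitiveRoot.exists_map_eq_pow_four (hζ : IsPrimitiveRoot ζ 5) {d : ℤ}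
    (hr : r ^ 2 = d) (hd : ¬IsSquare d) (h5d : ¬IsSquare (5 * d)) :
    ∃ φ : Gal(N/ℚ), φ ζ = ζ ^ 4 ∧ φ r = -r := by
  have hs := hζ.one_add_two_mul_sq
  have hs0 : 1 + 2 * (ζ + ζ ^ 4) ≠ 0 := fun h => by
    rw [h] at hs
    norm_num at hs
  have hneg : ∀ {x : N}, x ≠ 0 → x ≠ -x := fun hx h => hx (self_eq_neg.1 h)
  obtain ⟨κ, hκ⟩ := IsGalois.exists_map_eq_neg_of_not_isSquare (n := 5)
    (y := 1 + 2 * (ζ + ζ ^ 4)) (by decide +kernel) (by rw [hs, Int.cast_ofNat])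
  have hκ' : κ ζ = ζ ^ 2 ∨ κ ζ = ζ ^ 3 := (hζ.map_eq_pow_of_five κ).resolve_left fun h =>
    hneg hs0 ((hζ.map_one_add_two_mul_of_map h).symm.trans hκ)
  have hsq : ∀ φ : Gal(N/ℚ), φ r = r ∨ φ r = -r := fun φ =>
    sq_eq_sq_iff_eq_or_eq_neg.1 (by rw [← map_pow, hr, map_intCast])
  have hfin : ∀ φ : Gal(N/ℚ), (φ ζ = ζ ∨ φ ζ = ζ ^ 4) → φ r = -r →
      ∃ φ : Gal(N/ℚ), φ ζ = ζ ^ 4 ∧ φ r = -r := by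
    rintro φ (h | h) hφr
    · refine ⟨φ * κ * κ, ?_, ?_⟩
      · simp only [AlgEquiv.mul_apply]
        rcases hκ' with h' | h'
        · simp only [h', map_pow, h]
          ring
        · simp only [h', map_pow, h]
          linear_combination ζ ^ 4 * hζ.pow_eq_one
      · simp only [AlgEquiv.mul_apply]
        rcases hsq κ with h' | h' <;> simp [h', hφr]
    · exact ⟨φ, h, hφr⟩
  obtain ⟨τ, hτ⟩ := IsGalois.exists_map_eq_neg_of_not_isSquare hd hr
  rcases hζ.map_eq_pow_of_five τ with h | hτζ
  · exact hfin τ h hτ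
  obtain ⟨ρ, hρ⟩ := IsGalois.exists_map_eq_neg_of_not_isSquare
    (y := (1 + 2 * (ζ + ζ ^ 4)) * r) h5d (by rw [mul_pow, hs, hr]; push_cast; ring)
  rw [map_mul] at hρ
  rcases hζ.map_eq_pow_of_five ρ with h | hρζ
  · refine hfin ρ h (mul_left_cancel₀ hs0 ?_)
    rw [hζ.map_one_add_two_mul_of_map h] at hρ
    rw [hρ, mul_neg]
  · have hρr : ρ r = r := by
      rw [hζ.map_one_add_two_mul_of_map' hρζ, neg_mul, neg_inj] at hρ
      exact mul_left_cancel₀ hs0 hρ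
    refine hfin (ρ * τ) ?_ (by rw [AlgEquiv.mul_apply, hτ, map_neg, hρr])
    have h6 : (ζ ^ 2) ^ 3 = ζ := by linear_combination ζ * hζ.pow_eq_one
    have h9 : (ζ ^ 3) ^ 3 = ζ ^ 4 := by linear_combination ζ ^ 4 * hζ.pow_eq_one
    rw [AlgEquiv.mul_apply]
    rcases hτζ with h1 | h1 <;> rcases hρζ with h2 | h2 <;> rw [h1, map_pow, h2]
    · exact Or.inr (by ring)
    · exact Or.inl (by rw [← pow_mul, mul_comm, pow_mul, h6])
    · exact Or.inl h6
    · exact Or.inr h9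

end GaloisConjugates

namespace NumberField

theorem isTotallyComplex_of_quartic {M : Type*} [Field M] {x : M} {d : ℤ} (hd : 0 < d)
    (hx : x ^ 4 + 5 * d * x ^ 2 + 5 * d ^ 2 = 0) : IsTotallyComplex M := by
  refine ⟨fun v => InfinitePlace.not_isReal_iff_isComplex.1 fun hv => ?_⟩
  have h := congrArg (InfinitePlace.embedding_of_isReal hv) hx
  simp only [map_add, map_mul, map_pow, map_ofNat, map_intCast, map_zero] at h
  have hd' : (0 : ℝ) < d := by exact_mod_cast hd
  have : 0 < InfinitePlace.embedding_of_isReal hv x ^ 4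
    + 5 * d * InfinitePlace.embedding_of_isReal hv x ^ 2 + 5 * (d : ℝ) ^ 2 := by positivity
  exact this.ne' h

variable {M N : Type} [Field M] [NumberField M] [Field N] [NumberField N] [Algebra M N]

theorem exists_injective_classGroup_of_generator [IsGalois ℚ N] {x : M} {ζ r θ θ' : 𝓞 N}
    {d t t' s k : ℤ} (hζ : IsPrimitiveRoot ζ 5) (hr : r ^ 2 = d) (hd : 0 < d)
    (hdsq : ¬IsSquare d) (h5d : ¬IsSquare (5 * d)) (ht : t ^ 2 - 4 = d)
    (ht' : t' ^ 2 - 4 = 125 * d) (hθ : 2 * θ ^ 5 = t + r)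
    (hθ' : 2 * θ' ^ 5 = t' + 5 * (1 + 2 * (ζ + ζ ^ 4)) * r)
    (hx : algebraMap M N x = algebraMap (𝓞 N) N ((ζ - ζ ^ 4) * r))
    (hgen : ∀ φ : Gal(N/ℚ), φ (algebraMap M N x) = algebraMap M N x →
      ∀ m : M, φ (algebraMap M N m) = algebraMap M N m)
    (h25 : 25 ∣ t) (hs : s ^ 2 = 1) (hk : t' = 2 * s + 125 * k) {n₁ n₁' n₂ n₂' : ℕ}
    (hW₁ : HasKummerWitness t t' n₁ n₁') (hW₂ : HasKummerWitness t t' n₂ n₂')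
    (hn : ((n₁ : ZMod 5) * n₂') ^ 2 ≠ (n₂ * n₁') ^ 2) :
    ∃ f : Multiplicative (ZMod 5 × ZMod 5) →* ClassGroup (𝓞 M), Function.Injective f := by
  have hinj : Function.Injective (algebraMap (𝓞 N) N) := FaithfulSMul.algebraMap_injective _ _
  have hζN : IsPrimitiveRoot (algebraMap (𝓞 N) N ζ) 5 := hζ.map_of_injective hinj
  have hrN : algebraMap (𝓞 N) N r ^ 2 = d := by rw [← map_pow, hr, map_intCast]
  have : IsTotallyComplex M := by
    refine isTotallyComplex_of_quartic (x := x) hd ((algebraMap M N).injective ?_)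
    simp only [map_add, map_mul, map_pow, map_ofNat, map_intCast, map_zero, map_sub, hx]
    set z := algebraMap (𝓞 N) N ζ
    set w := algebraMap (𝓞 N) N r
    have h1 : (z - z ^ 4) ^ 2 = z ^ 2 + z ^ 3 - 2 := by
      linear_combination (z ^ 3 - 2) * hζN.pow_eq_one
    have h2 : (z ^ 2 + z ^ 3) ^ 2 + (z ^ 2 + z ^ 3) - 1 = 0 := by
      linear_combination hζN.one_add_pow_five_eq_zero + (2 + z) * hζN.pow_eq_one
    have h3 : ((z - z ^ 4) * w) ^ 2 = (z ^ 2 + z ^ 3 - 2) * d := by rw [mul_pow, h1, hrN]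
    rw [show ((z - z ^ 4) * w) ^ 4 = (((z - z ^ 4) * w) ^ 2) ^ 2 by ring, h3]
    linear_combination (d : N) ^ 2 * h2
  obtain ⟨φ, hφζ, hφr⟩ := hζN.exists_map_eq_pow_four hrN hdsq h5d
  have hφx : φ (algebraMap M N x) = algebraMap M N x := by
    simp only [hx, map_mul, map_sub, map_pow, hφζ, hφr, hζN.pow_four_pow_four]
    ring
  refine exists_injective_classGroup_of_hasKummerWitness (fun u hu => ?_) hζ hr hd.ne' ht ht' hθ hθ'
    (fun σ => hinj ?_) (fun φ h => hgen φ ?_) h25 hs hk hW₁ hW₂ hn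
  · have hw := congrArg (fun v : (𝓞 M)ˣ => algebraMap M N (algebraMap (𝓞 M) M v)) hu
    simp only [Units.val_pow_eq_pow_val, map_pow, Units.val_one, map_one] at hw
    obtain ⟨i, -, hi⟩ := hζN.eq_pow_of_pow_eq_one hw
    have h1 := hgen φ hφx (algebraMap (𝓞 M) M u)
    set w := algebraMap M N (algebraMap (𝓞 M) M u) with hw'
    have h2 : w ^ 4 = w := by
      rw [← hi, map_pow, hφζ, ← pow_mul, mul_comm, pow_mul, hi] at h1
      exact h1
    have h3 : w = 1 := by
      have h4 : w * w = 1 := by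
        nth_rw 1 [← h2]
        rw [← hw]; ring
      have h5 : w ^ 5 = w := by
        linear_combination w * (w * w + 1) * h4
      rw [← h5, hw]
    refine Units.ext (FaithfulSMul.algebraMap_injective (𝓞 M) M ((algebraMap M N).injective ?_))
    rw [← hw', h3]
    simp
  · exact (congrArg σ hx).symm.trans ((σ.commutes x).trans hx)
  · rw [hx]
    exact congrArg (algebraMap (𝓞 N) N) h

end NumberField

theorem Int.not_isSquare_sq_sub_four {t : ℤ} (ht : 3 ≤ t) : ¬IsSquare (t ^ 2 - 4) := by
  rintro ⟨a, ha⟩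
  wlog h0 : 0 ≤ a generalizing a
  · exact this (-a) (by rw [ha]; ring) (by omega)
  have h1 : a < t := by nlinarith
  have h2 : t - 1 < a := by nlinarith
  omega

theorem Int.exists_eq_add_mul_of_dvd_sq_sub_four {a : ℤ} (h : 125 ∣ a ^ 2 - 4) :
    ∃ s k : ℤ, s ^ 2 = 1 ∧ a = 2 * s + 125 * k := by
  have h5 : Prime (5 : ℤ) := Nat.prime_iff_prime_int.1 Nat.prime_five
  have h' : (5 : ℤ) ^ 3 ∣ (a - 2) * (a + 2) := by
    rwa [show (a - 2) * (a + 2) = a ^ 2 - 4 by ring]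
  by_cases hdvd : 5 ∣ a - 2
  · obtain ⟨k, hk⟩ := h5.pow_dvd_of_dvd_mul_right 3 (by omega : ¬5 ∣ a + 2) h'
    exact ⟨1, k, by norm_num, by omega⟩
  · obtain ⟨k, hk⟩ := h5.pow_dvd_of_dvd_mul_left 3 hdvd h'
    exact ⟨-1, k, by norm_num, by omega⟩

open Polynomial in
theorem NumberField.exists_isGalois_of_monic {P : ℤ[X]} (hP : P.Monic) :
    ∃ N : IntermediateField ℚ ℂ, ∃ _ : NumberField N, IsGalois ℚ N ∧
      ∀ y : ℂ, aeval y P = 0 → ∃ Y : 𝓞 N, algebraMap N ℂ (algebraMap (𝓞 N) N Y) = y := by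
  set p := P.map (algebraMap ℤ ℚ) with hp
  have hp0 : p ≠ 0 := (hP.map _).ne_zero
  let N := IntermediateField.adjoin ℚ (p.rootSet ℂ)
  have : p.IsSplittingField ℚ N :=
    IntermediateField.adjoin_rootSet_isSplittingField (IsAlgClosed.splits _)
  have : FiniteDimensional ℚ N := IsSplittingField.finiteDimensional N p
  have : Normal ℚ N := Normal.of_isSplittingField p
  refine ⟨N, ⟨⟩, ⟨⟩, fun y hy => ?_⟩
  have hyN : y ∈ N := IntermediateField.subset_adjoin _ _ ((mem_rootSet_of_ne hp0).2 (by
    rw [hp, aeval_map_algebraMap, hy]))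
  have hint : IsIntegral ℤ (⟨y, hyN⟩ : N) := ⟨P, hP, N.val.injective (by
    rw [← aeval_def, map_zero]
    exact (aeval_algHom_apply (N.val.restrictScalars ℤ) (⟨y, hyN⟩ : N) P).symm.trans hy)⟩
  exact ⟨⟨_, hint⟩, rfl⟩

open Polynomial in
theorem NumberField.exists_isGalois_of_kummer_generators {ζ r θ θ' : ℂ} {d t t' : ℤ}
    (hζ : ζ ^ 5 = 1) (hr : r ^ 2 = d) (hθ : (θ ^ 5) ^ 2 - t * θ ^ 5 + 1 = 0)
    (hθ' : (θ' ^ 5) ^ 2 - t' * θ' ^ 5 + 1 = 0) :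
    ∃ N : IntermediateField ℚ ℂ, ∃ _ : NumberField N, IsGalois ℚ N ∧
      ∃ Z R Θ Θ' : 𝓞 N, algebraMap N ℂ (algebraMap (𝓞 N) N Z) = ζ ∧
        algebraMap N ℂ (algebraMap (𝓞 N) N R) = r ∧ algebraMap N ℂ (algebraMap (𝓞 N) N Θ) = θ ∧
        algebraMap N ℂ (algebraMap (𝓞 N) N Θ') = θ' := by
  let P : ℤ[X] := (X ^ 5 - 1) * (X ^ 2 - C d) * (X ^ 10 - C t * X ^ 5 + 1) *
    (X ^ 10 - C t' * X ^ 5 + 1)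
  have hP : P.Monic := by
    refine Monic.mul (Monic.mul (Monic.mul ?_ ?_) ?_) ?_ <;> monicity!
  have haev : ∀ (y : ℂ) (a : ℤ), (y ^ 5) ^ 2 - a * y ^ 5 + 1 = 0 →
      aeval y (X ^ 10 - C a * X ^ 5 + 1 : ℤ[X]) = 0 := fun y a h => by
    simp only [map_add, map_sub, map_mul, map_pow, map_one, aeval_X, eq_intCast, map_intCast]
    linear_combination h
  obtain ⟨N, hN, hgal, hroots⟩ := exists_isGalois_of_monic hP
  obtain ⟨Z, hZ⟩ := hroots ζ (by simp [P, hζ])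
  obtain ⟨R, hR⟩ := hroots r (by simp [P, hr])
  obtain ⟨Θ, hΘ⟩ := hroots θ (by
    simp only [P, map_mul, mul_eq_zero]
    exact Or.inl (Or.inr (haev θ t hθ)))
  obtain ⟨Θ', hΘ'⟩ := hroots θ' (by
    simp only [P, map_mul, mul_eq_zero]
    exact Or.inr (haev θ' t' hθ'))
  exact ⟨N, hN, hgal, Z, R, Θ, Θ', hZ, hR, hΘ, hΘ'⟩

end ClassGroupRank

/-- Proposition 3.6. For integers `α, β ≥ 2` with `α² − 125β² = 4`
and `25 ∣ α + β`, and `d = (α+β)² − 4`, the `5`-rank of the class group of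
`M = ℚ((ζ₅ − ζ₅⁻¹)√d)` is at least `2`: there is an injective group homomorphism from
`(ℤ/5ℤ) × (ℤ/5ℤ)` into the class group of the ring of integers of `M`. -/
theorem stmt_12 (α β : ℤ) (hα : 2 ≤ α) (hβ : 2 ≤ β)
    (hpell : α ^ 2 - 125 * β ^ 2 = 4) (hcong : (25 : ℤ) ∣ (α + β))
    (d : ℤ) (hd : d = (α + β) ^ 2 - 4)
    (ζ : ℂ) (hζ : ζ = Complex.exp (2 * Real.pi * Complex.I / 5))
    (M : IntermediateField ℚ ℂ)
    (hM : M = IntermediateField.adjoin ℚ {(ζ - ζ⁻¹) * ((Real.sqrt (d : ℝ) : ℝ) : ℂ)}) :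
    ∃ f : Multiplicative (ZMod 5 × ZMod 5) →* ClassGroup (𝓞 M),
      Function.Injective f := by
  have hβα : β < α := by nlinarith
  have hpar : Even (α - β) := by
    have h1 : Even (α ^ 2 - 125 * β ^ 2) := by rw [hpell]; decide
    rw [Int.even_sub, Int.even_mul, Int.even_pow' (by norm_num), Int.even_pow' (by norm_num)] at h1
    rw [Int.even_sub, h1]
    simp [show ¬Even (125 : ℤ) by decide]
  obtain ⟨w, hw⟩ := hpar
  lift w to ℕ using (by omega) with u
  lift β to ℕ using (by omega) with v
  obtain rfl : α = 2 * u + v := by omega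
  have huv : (u : ℤ) ^ 2 + u * v - 31 * v ^ 2 = 1 := by linarith
  obtain ⟨n₁, n₁', n₂, n₂', hW₁, hW₂, hn⟩ := exists_hasKummerWitness huv (by omega)
  have ht : (2 * u + 2 * v : ℤ) ^ 2 - 4 = d := by rw [hd]; ring
  have ht' : (2 * u + 126 * v : ℤ) ^ 2 - 4 = 125 * d := by
    rw [hd]; linear_combination -124 * hpell
  have hdpos : 0 < d := by nlinarith
  have hdsq : ¬IsSquare d := ht ▸ Int.not_isSquare_sq_sub_four (by omega)
  have h5d : ¬IsSquare (5 * d) := fun ⟨a, ha⟩ => by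
    refine Int.not_isSquare_sq_sub_four (t := 2 * u + 126 * v) (by omega) ⟨5 * a, ?_⟩
    rw [ht']
    linear_combination 25 * ha
  obtain ⟨s, k, hs, hk⟩ := Int.exists_eq_add_mul_of_dvd_sq_sub_four
    (a := 2 * u + 126 * v) ⟨d, ht'⟩
  have hζ5 : IsPrimitiveRoot ζ 5 := hζ ▸ Complex.isPrimitiveRoot_exp 5 (by norm_num)
  set r : ℂ := ((Real.sqrt (d : ℝ) : ℝ) : ℂ) with hr
  have hr2 : r ^ 2 = d := by
    rw [hr, ← Complex.ofReal_pow, Real.sq_sqrt (by exact_mod_cast hdpos.le)]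
    simp
  obtain ⟨θ, hθ⟩ := IsAlgClosed.exists_pow_nat_eq ((2 * u + 2 * v + r) / 2) (n := 5) (by norm_num)
  obtain ⟨θ', hθ'⟩ := IsAlgClosed.exists_pow_nat_eq
    ((2 * u + 126 * v + 5 * (1 + 2 * (ζ + ζ ^ 4)) * r) / 2) (n := 5) (by norm_num)
  have hη : (θ ^ 5) ^ 2 - (2 * u + 2 * v) * θ ^ 5 + 1 = 0 := by
    have h : (2 * u + 2 * v : ℂ) ^ 2 - 4 = d := by exact_mod_cast ht
    rw [hθ]
    linear_combination (hr2 - h) / 4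
  have hη' : (θ' ^ 5) ^ 2 - (2 * u + 126 * v) * θ' ^ 5 + 1 = 0 := by
    have h : (2 * u + 126 * v : ℂ) ^ 2 - 4 = 125 * d := by exact_mod_cast ht'
    rw [hθ']
    linear_combination (125 * hr2 + 25 * r ^ 2 * hζ5.one_add_two_mul_sq - h) / 4
  obtain ⟨N, hN, hgal, Z, R, Θ, Θ', hZ, hR, hΘ, hΘ'⟩ :=
    NumberField.exists_isGalois_of_kummer_generators (t := 2 * u + 2 * v) (t' := 2 * u + 126 * v)
      hζ5.pow_eq_one hr2 (by push_cast; exact hη) (by push_cast; exact hη')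
  have hinj : Function.Injective fun Y : 𝓞 N => algebraMap N ℂ (algebraMap (𝓞 N) N Y) :=
    (algebraMap N ℂ).injective.comp (FaithfulSMul.algebraMap_injective (𝓞 N) N)
  have hx : (ζ - ζ⁻¹) * r = algebraMap N ℂ (algebraMap (𝓞 N) N ((Z - Z ^ 4) * R)) := by
    have : ζ⁻¹ = ζ ^ 4 := inv_eq_of_mul_eq_one_right (by rw [← hζ5.pow_eq_one]; ring)
    simp only [map_mul, map_sub, map_pow, hZ, hR, this]
  have hMN : M ≤ N := by
    rw [hM, IntermediateField.adjoin_simple_le_iff, hx]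
    exact SetLike.coe_mem _
  have hNM : NumberField M := by
    have : FiniteDimensional ℚ M := FiniteDimensional.of_injective
      (IntermediateField.inclusion hMN).toLinearMap (IntermediateField.inclusion_injective hMN)
    exact ⟨⟩
  let : Algebra M N := (IntermediateField.inclusion hMN).toAlgebra
  refine exists_injective_classGroup_of_generator (N := N) (ζ := Z) (r := R) (θ := Θ) (θ' := Θ')
    (x := ⟨(ζ - ζ⁻¹) * r, hM ▸ IntermediateField.mem_adjoin_simple_self ℚ _⟩) ?_ (hinj ?_) hdpos
    hdsq h5d ht ht' (hinj ?_) (hinj ?_) ((algebraMap N ℂ).injective hx) (fun φ hφ m => ?_)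
    (by convert hcong using 1; ring) hs hk hW₁ hW₂ hn
  · exact IsPrimitiveRoot.of_map_of_injective
      (f := (algebraMap N ℂ).comp (algebraMap (𝓞 N) N)) (by simpa [hZ] using hζ5) hinj
  · simp only [map_pow, map_intCast, hR, hr2]
  · simp only [map_mul, map_pow, map_add, map_ofNat, hΘ, hθ, hR, map_intCast]
    push_cast
    ring
  · simp only [map_mul, map_pow, map_add, map_ofNat, map_one, hΘ', hθ', hR, hZ, map_intCast]
    push_cast
    ring
  · have := IntermediateField.algHom_ext_of_eq_adjoin _ hM
      (φ₁ := (φ : N →ₐ[ℚ] N).comp (IntermediateField.inclusion hMN))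
      (φ₂ := IntermediateField.inclusion hMN) (by
        rintro _ rfl
        exact hφ)
    exact DFunLike.congr_fun this m
end

section
/- Let α, β ≥ 2 be integers satisfying α² − 125β² = 4 and α + β ≡ 0 (mod 25), and set d = (α+β)² − 4 and ε₂ = (α + 125β + 5·√(5d))/2 ∈ ℝ. Then ε₂ is not a fifth power in the real quadratic field k₂ = ℚ(√(5d)): there is no element x of the subfield of ℝ generated over ℚ by √(5d) such that x⁵ = ε₂. -/
/-- Suppose `5 * n = p - 1`. If the trace `y + z` of an element `y` of `𝔽_p` with inverse `z ≠ y`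
is a value of the Dickson polynomial `X ^ 5 - 5 * X ^ 3 + 5 * X`, then `y` is a fifth power. -/
lemma pow_eq_one_of_dickson_five {p n : ℕ} (hprime : p.Prime) (hp : 5 * n = p - 1)
    (h2 : (2 : ZMod p) ≠ 0) {t y z : ZMod p} (ht : t ^ 5 - 5 * t ^ 3 + 5 * t = y + z)
    (hyz : y * z = 1) (hne : y ≠ z) : y ^ n = 1 := by
  have : Fact p.Prime := ⟨hprime⟩
  have hfac : (y - z) ^ 2 = (t ^ 2 - 4) * (t ^ 4 - 3 * t ^ 2 + 1) ^ 2 := by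
    linear_combination (-(t ^ 5 - 5 * t ^ 3 + 5 * t) - (y + z)) * ht - 4 * hyz
  have hq : t ^ 4 - 3 * t ^ 2 + 1 ≠ 0 := by
    intro hq
    rw [hq] at hfac
    exact hne (sub_eq_zero.mp (by simpa using hfac))
  obtain ⟨w, hw⟩ : ∃ w, y - z = w * (t ^ 4 - 3 * t ^ 2 + 1) :=
    ⟨(y - z) / (t ^ 4 - 3 * t ^ 2 + 1), (div_mul_cancel₀ _ hq).symm⟩
  have hw2 : w ^ 2 = t ^ 2 - 4 := by
    refine mul_right_cancel₀ (pow_ne_zero 2 hq) ?_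
    rw [← hfac, hw]; ring
  obtain ⟨x, hx⟩ : ∃ x, t + w = 2 * x := ⟨(t + w) / 2, by field_simp⟩
  obtain rfl : w = 2 * x - t := by linear_combination hx
  have hxt : x * (t - x) = 1 := by
    refine mul_left_cancel₀ (pow_ne_zero 2 h2) ?_
    linear_combination -hw2
  have hx0 : x ≠ 0 := left_ne_zero_of_mul_eq_one hxt
  have hx5 : y = x ^ 5 := by
    refine mul_left_cancel₀ h2 ?_
    linear_combination hw - ht +
      (2 * x ^ 3 + 2 * t * x ^ 2 + 2 * (t ^ 2 - 1) * x + 2 * t ^ 3 - 4 * t) * hxt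
  rw [hx5, ← pow_mul, hp]
  exact ZMod.pow_card_sub_one_eq_one hx0

/-- Criterion for `y + z`, where `y * z = 1` in `𝔽_p`, not to be a value of the Dickson polynomial
`X ^ 5 - 5 * X ^ 3 + 5 * X` modulo `p`. -/
lemma dickson_five_emod_ne {p n y z : ℕ} (hprime : p.Prime) (hp : 5 * n = p - 1) (h2 : 2 < p)
    (hyz : y * z % p = 1 % p) (hne : y % p ≠ z % p) (hn : y ^ n % p ≠ 1 % p) (t : ℤ) :
    (t ^ 5 - 5 * t ^ 3 + 5 * t) % p ≠ (y + z) % p := by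
  intro ht
  replace ht := (ZMod.intCast_eq_intCast_iff' _ _ _).mpr ht
  push_cast at ht
  rw [Ne, ← ZMod.natCast_eq_natCast_iff'] at hne hn
  rw [← ZMod.natCast_eq_natCast_iff'] at hyz
  push_cast at hyz hn
  refine hn (pow_eq_one_of_dickson_five hprime hp (fun h => ?_) ht hyz hne)
  exact absurd (Nat.le_of_dvd two_pos ((ZMod.natCast_eq_zero_iff 2 p).mp h)) h2.not_ge

/-- Multiplication by `(123 + 11√125) / 2` on pairs `(a, b)` representing `(a + b√125) / 2`,
reduced modulo `25 * 31 * 9001 = 6975775`, where `2` has the inverse `3487888`. -/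
def pellMul (v : ℕ × ℕ) : ℕ × ℕ :=
  ((123 * v.1 + 1375 * v.2) * 3487888 % 6975775, (11 * v.1 + 123 * v.2) * 3487888 % 6975775)

lemma isPeriodicPt_pellMul : Function.IsPeriodicPt pellMul 150 (2, 0) := by
  have h : pellMul^[150] (2, 0) = (2, 0) := by decide +kernel
  exact h

lemma pellMul_iterate_trace_mod : ∀ j < 150,
    ((pellMul^[j] (2, 0)).1 + (pellMul^[j] (2, 0)).2) % 25 = 0 →
    ((pellMul^[j] (2, 0)).1 + 125 * (pellMul^[j] (2, 0)).2) % 31 = 19 ∨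
    ((pellMul^[j] (2, 0)).1 + 125 * (pellMul^[j] (2, 0)).2) % 9001 ∈
      [5060, 3941, 3526, 5475] := by
  decide +kernel

lemma pell_ne_of_lt : ∀ b ∈ Finset.Icc (1 : ℤ) 10, ∀ a ∈ Finset.Icc (1 : ℤ) 120,
    a ^ 2 - 125 * b ^ 2 ≠ 4 := by
  decide +kernel

/-- Modulo `6975775`, every solution of `α ^ 2 - 125 * β ^ 2 = 4` in nonnegative integers arises
from `(2, 0)` by iterating `pellMul`. -/
lemma exists_iterate_pellMul (n : ℕ) : ∀ α β : ℤ, 0 < α → 0 ≤ β → β.toNat = n →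
    α ^ 2 - 125 * β ^ 2 = 4 → ∃ j : ℕ,
      α ≡ ((pellMul^[j] (2, 0)).1 : ℤ) [ZMOD 6975775] ∧
      β ≡ ((pellMul^[j] (2, 0)).2 : ℤ) [ZMOD 6975775] := by
  induction n using Nat.strong_induction_on with
  | _ n ih =>
  intro α β hα hβ hn h
  rcases hβ.eq_or_lt with rfl | hβ'
  · obtain rfl : α = 2 := by nlinarith
    exact ⟨0, by simp, by simp⟩
  have hβ11 : 11 ≤ β := by
    by_contra! hlt
    exact pell_ne_of_lt β (Finset.mem_Icc.mpr ⟨hβ', by lia⟩) α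
      (Finset.mem_Icc.mpr ⟨hα, by nlinarith⟩) h
  have hlow : 11 * β < α := by nlinarith
  have hup : 11 * α ≤ 123 * β := by nlinarith
  have hpos : 1375 * β < 123 * α := by nlinarith
  obtain ⟨a, rfl⟩ : ∃ a, α = β + 2 * a := by
    have hmod : (α - β) % 2 = 0 := by
      have h4 := congrArg (· % 2) h
      rcases Int.emod_two_eq_zero_or_one α with h1 | h1 <;>
        rcases Int.emod_two_eq_zero_or_one β with h2 | h2 <;>
        simp [pow_two, Int.sub_emod, Int.mul_emod, h1, h2] at h4 ⊢
    exact ⟨(α - β) / 2, by lia⟩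
  obtain ⟨j, h1, h2⟩ := ih (56 * β - 11 * a).toNat (by lia) (-626 * β + 123 * a) (56 * β - 11 * a)
    (by lia) (by lia) rfl (by linear_combination h)
  refine ⟨j + 1, ?_⟩
  rw [Function.iterate_succ_apply']
  generalize pellMul^[j] (2, 0) = v at h1 h2
  simp only [pellMul, Int.ModEq] at h1 h2 ⊢
  lia

/-- The trace `α + 125 * β` is not a value of the fifth Dickson polynomial at an integer. -/
lemma dickson_five_ne_trace {α β : ℤ} (hα : 0 < α) (hβ : 0 ≤ β)
    (hpell : α ^ 2 - 125 * β ^ 2 = 4) (hcong : (25 : ℤ) ∣ α + β) (t : ℤ) :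
    t ^ 5 - 5 * t ^ 3 + 5 * t ≠ α + 125 * β := by
  intro ht
  obtain ⟨j, h1, h2⟩ := exists_iterate_pellMul _ α β hα hβ rfl hpell
  rw [← isPeriodicPt_pellMul.iterate_mod_apply j] at h1 h2
  have hcheck := pellMul_iterate_trace_mod (j % 150) (Nat.mod_lt _ (by norm_num))
  generalize pellMul^[j % 150] (2, 0) = v at h1 h2 hcheck
  have hT : (α + 125 * β) % 31 = (27 + 23) % 31 ∨ (α + 125 * β) % 9001 = (8786 + 5275) % 9001 ∨
      (α + 125 * β) % 9001 = (3726 + 215) % 9001 ∨ (α + 125 * β) % 9001 = (2201 + 1325) % 9001 ∨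
      (α + 125 * β) % 9001 = (7676 + 6800) % 9001 := by
    simp only [Int.ModEq, List.mem_cons, List.not_mem_nil, or_false] at h1 h2 hcheck
    lia
  rw [← ht] at hT
  rcases hT with hT | hT | hT | hT | hT
  · exact dickson_five_emod_ne (p := 31) (n := 6) (y := 27) (z := 23) (by norm_num)
      (by norm_num) (by norm_num) (by norm_num) (by norm_num) (by decide +kernel) t hT
  · exact dickson_five_emod_ne (p := 9001) (n := 1800) (y := 8786) (z := 5275) (by norm_num)
      (by norm_num) (by norm_num) (by norm_num) (by norm_num) (by decide +kernel) t hT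
  · exact dickson_five_emod_ne (p := 9001) (n := 1800) (y := 3726) (z := 215) (by norm_num)
      (by norm_num) (by norm_num) (by norm_num) (by norm_num) (by decide +kernel) t hT
  · exact dickson_five_emod_ne (p := 9001) (n := 1800) (y := 2201) (z := 1325) (by norm_num)
      (by norm_num) (by norm_num) (by norm_num) (by norm_num) (by decide +kernel) t hT
  · exact dickson_five_emod_ne (p := 9001) (n := 1800) (y := 7676) (z := 6800) (by norm_num)
      (by norm_num) (by norm_num) (by norm_num) (by norm_num) (by decide +kernel) t hT

/-- Elements of `ℚ(s)` for a quadratic irrational `s` with rational square. -/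
lemma exists_eq_add_mul_of_mem_adjoin {s : ℝ} {D : ℚ} (hs : s ^ 2 = D) (hirr : Irrational s)
    {x : ℝ} (hx : x ∈ IntermediateField.adjoin ℚ {s}) : ∃ a b : ℚ, x = a + b * s := by
  induction hx using IntermediateField.adjoin_induction with
  | mem x hx => exact ⟨0, 1, by simp_all⟩
  | algebraMap x => exact ⟨x, 0, by simp⟩
  | add x y _ _ hx hy =>
    obtain ⟨a, b, rfl⟩ := hx
    obtain ⟨c, e, rfl⟩ := hy
    exact ⟨a + c, b + e, by push_cast; ring⟩
  | mul x y _ _ hx hy =>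
    obtain ⟨a, b, rfl⟩ := hx
    obtain ⟨c, e, rfl⟩ := hy
    exact ⟨a * c + b * e * D, a * e + b * c, by push_cast; linear_combination (b * e : ℝ) * hs⟩
  | inv x _ hx =>
    obtain ⟨a, b, rfl⟩ := hx
    by_cases h0 : (a + b * s : ℝ) = 0
    · exact ⟨0, 0, by simp [h0]⟩
    have h1 : (a - b * s : ℝ) ≠ 0 := by
      intro h1
      have hb : b = 0 := by
        by_contra hb
        exact hirr ⟨a / b, by push_cast; field_simp; linear_combination h1⟩
      subst hb
      simp_all
    have h2 : (a + b * s : ℝ) * (a - b * s) = (a ^ 2 - b ^ 2 * D : ℚ) := by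
      push_cast; linear_combination (-b ^ 2 : ℝ) * hs
    have h3 : ((a ^ 2 - b ^ 2 * D : ℚ) : ℝ) ≠ 0 := h2 ▸ mul_ne_zero h0 h1
    refine ⟨a / (a ^ 2 - b ^ 2 * D), -b / (a ^ 2 - b ^ 2 * D), ?_⟩
    rw [Rat.cast_div, Rat.cast_div, inv_eq_of_mul_eq_one_right]
    field_simp
    push_cast at h2 ⊢
    linear_combination h2

lemma eq_of_add_mul_eq {s : ℝ} (hirr : Irrational s) {a b c e : ℚ}
    (h : (a + b * s : ℝ) = c + e * s) : a = c ∧ b = e := by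
  have hb : b = e := by
    by_contra hb
    have hbe : (b - e : ℝ) ≠ 0 := sub_ne_zero.mpr (by exact_mod_cast hb)
    exact hirr ⟨(c - a) / (b - e), by push_cast; field_simp; linear_combination -h⟩
  subst hb
  exact ⟨by exact_mod_cast add_right_cancel h, rfl⟩

lemma exists_int_eq_of_dickson_five {t : ℚ} {T : ℤ} (h : t ^ 5 - 5 * t ^ 3 + 5 * t = T) :
    ∃ m : ℤ, (m : ℚ) = t := by
  have hint : IsIntegral ℤ t := by
    refine ⟨.X ^ 5 - 5 * .X ^ 3 + 5 * .X - .C T, by monicity!, ?_⟩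
    simp [Polynomial.eval₂_sub, Polynomial.eval₂_add, -eq_intCast, h]
  exact IsIntegrallyClosed.isIntegral_iff.mp hint

lemma irrational_sqrt_five_mul {d : ℤ} (hd : 0 < d) (h5 : ¬ (5 : ℤ) ∣ d) :
    Irrational (Real.sqrt (5 * (d : ℝ))) := by
  have h : ¬ IsSquare (5 * d) := by
    rintro ⟨r, hr⟩
    obtain ⟨k, rfl⟩ : (5 : ℤ) ∣ r :=
      or_self_iff.mp ((Int.prime_iff_natAbs_prime.mpr (by norm_num)).dvd_or_dvd ⟨d, hr.symm⟩)
    exact h5 ⟨k * k, by linarith⟩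
  exact_mod_cast (irrational_sqrt_intCast_iff_of_nonneg (by positivity)).mpr h

/-- For integers `α, β ≥ 2` with `α² − 125β² = 4` and `25 ∣ α + β`,
`d = (α+β)² − 4` and `ε₂ = (α + 125β + 5√(5d))/2`, the unit `ε₂` is not a fifth power
in the real quadratic field `k₂ = ℚ(√(5d)) ⊆ ℝ`. -/
theorem stmt_14 (α β : ℤ) (hα : 2 ≤ α) (hβ : 2 ≤ β)
    (hpell : α ^ 2 - 125 * β ^ 2 = 4) (hcong : (25 : ℤ) ∣ (α + β))
    (d : ℤ) (hd : d = (α + β) ^ 2 - 4)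
    (ε₂ : ℝ) (hε : ε₂ = ((α : ℝ) + 125 * (β : ℝ) + 5 * Real.sqrt (5 * (d : ℝ))) / 2) :
    ¬ ∃ x : IntermediateField.adjoin ℚ {Real.sqrt (5 * (d : ℝ))},
        (x : ℝ) ^ 5 = ε₂ := by
  rintro ⟨⟨x, hxmem⟩, hx⟩
  have hd0 : 0 < d := by nlinarith
  have h5 : ¬ (5 : ℤ) ∣ d := by
    obtain ⟨k, hk⟩ := hcong
    rw [hd, hk]
    intro h
    have h4 : (5 : ℤ) ∣ 4 := by
      have := dvd_sub (Dvd.intro (125 * k ^ 2) rfl : (5 : ℤ) ∣ 5 * (125 * k ^ 2)) h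
      ring_nf at this
      exact this
    norm_num at h4
  have hirr := irrational_sqrt_five_mul hd0 h5
  have hs : Real.sqrt (5 * (d : ℝ)) ^ 2 = ((5 * d : ℚ) : ℝ) := by
    rw [Real.sq_sqrt (by positivity)]; push_cast; rfl
  obtain ⟨a, b, rfl⟩ := exists_eq_add_mul_of_mem_adjoin hs hirr hxmem
  generalize Real.sqrt (5 * (d : ℝ)) = s at *
  push_cast at hs
  obtain ⟨h1, h2⟩ := eq_of_add_mul_eq hirr
    (a := a ^ 5 + 10 * a ^ 3 * b ^ 2 * (5 * d) + 5 * a * b ^ 4 * (5 * d) ^ 2)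
    (b := 5 * a ^ 4 * b + 10 * a ^ 2 * b ^ 3 * (5 * d) + b ^ 5 * (5 * d) ^ 2)
    (c := (α + 125 * β) / 2) (e := 5 / 2) (by
      have h4 : s ^ 4 = (5 * d) ^ 2 := by rw [← hs]; ring
      push_cast
      simp only at hx
      linear_combination hx + hε - (10 * a ^ 3 * b ^ 2 + 10 * a ^ 2 * b ^ 3 * s : ℝ) * hs
        - (5 * a * b ^ 4 + b ^ 5 * s : ℝ) * h4)
  have hpellQ : (α : ℚ) ^ 2 - 125 * β ^ 2 = 4 := by exact_mod_cast hpell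
  have hdQ : (d : ℚ) = (α + β) ^ 2 - 4 := by exact_mod_cast hd
  have hnorm : (a ^ 2 - 5 * d * b ^ 2) ^ 5 = 1 := by
    have h : (a ^ 2 - 5 * d * b ^ 2) ^ 5 =
        ((α + 125 * β) / 2 : ℚ) ^ 2 - 5 * d * (5 / 2) ^ 2 := by
      rw [← h1, ← h2]; ring
    rw [h, hdQ]
    linear_combination -31 * hpellQ
  have hnorm1 : a ^ 2 - 5 * d * b ^ 2 = 1 :=
    (Odd.strictMono_pow (by decide : Odd 5)).injective (by simpa using hnorm)
  have htrace : (2 * a) ^ 5 - 5 * (2 * a) ^ 3 + 5 * (2 * a) = ((α + 125 * β : ℤ) : ℚ) := by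
    push_cast
    linear_combination 2 * h1 +
      2 * (10 * a ^ 3 + 5 * a * (5 * d * b ^ 2 + a ^ 2 - 1)) * hnorm1
  obtain ⟨m, hm⟩ := exists_int_eq_of_dickson_five htrace
  rw [← hm] at htrace
  exact dickson_five_ne_trace (by lia) (by lia) hpell hcong m (by exact_mod_cast htrace)
end
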